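/- arXiv:1504.07364 — 2 statements merged into one kernel-verified Lean document; each statement's English description precedes it below -/
import Mathlib

section
/- Define g^1_4(τ) = g_{(1/2,0)}(τ)⁸ / g_{(1/4,0)}(τ)⁸ for τ ∈ ℍ. Then g^1_4 is holomorphic on ℍ and, for c ∈ ℂ, the function g^1_4(τ) − c has no zeros on ℍ if and only if c ∈ {0, 16}; equivalently, the set of values taken by g^1_4 on ℍ is exactly ℂ∖{0, 16}. -/
open Complex UpperHalfPlane Matrix MatrixGroups CongruenceSubgroup
open scoped UpperHalfPlane Manifold Real

noncomputable section

/-- `N·τ` as a point of the upper half-plane (junk value `τ` if `N = 0`). -/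
def hsmul (N : ℕ) (τ : UpperHalfPlane) : UpperHalfPlane :=
  if hN : 0 < N then
    ⟨(N : ℂ) * τ, by
      have h0 : (0 : ℝ) < (N : ℝ) := by exact_mod_cast hN
      simpa [Complex.mul_im] using mul_pos h0 τ.2⟩
  else τ

/-- The Siegel function `g_r(τ)` given by its infinite product expansion. -/
def siegel (r : ℚ × ℚ) (τ : ℍ) : ℂ :=
  -Complex.exp ((Real.pi : ℂ) * Complex.I * (((r.1 : ℂ) ^ 2 - (r.1 : ℂ) + 1 / 6) * τ)) *
    Complex.exp ((Real.pi : ℂ) * Complex.I * (r.2 : ℂ) * ((r.1 : ℂ) - 1)) *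
    (1 - Complex.exp (2 * (Real.pi : ℂ) * Complex.I * ((r.1 : ℂ) * τ + (r.2 : ℂ)))) *
    ∏' n : ℕ,
      ((1 - Complex.exp (2 * (Real.pi : ℂ) * Complex.I *
          (((n : ℂ) + 1 + (r.1 : ℂ)) * τ + (r.2 : ℂ)))) *
       (1 - Complex.exp (2 * (Real.pi : ℂ) * Complex.I *
          (((n : ℂ) + 1 - (r.1 : ℂ)) * τ - (r.2 : ℂ)))))

/-- The lattice point `ω = m·τ + n` attached to a pair `(m,n) ∈ ℤ²`. -/
def lat (τ : ℍ) (p : ℤ × ℤ) : ℂ := (p.1 : ℂ) * τ + (p.2 : ℂ)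

/-- `g₂(τ) = 60 ∑_{ω ∈ L_τ ∖ {0}} ω⁻⁴`. -/
def g2C (τ : ℍ) : ℂ := 60 * ∑' p : {p : ℤ × ℤ // p ≠ 0}, ((lat τ p.1) ^ 4)⁻¹

/-- `g₃(τ) = 140 ∑_{ω ∈ L_τ ∖ {0}} ω⁻⁶`. -/
def g3C (τ : ℍ) : ℂ := 140 * ∑' p : {p : ℤ × ℤ // p ≠ 0}, ((lat τ p.1) ^ 6)⁻¹

/-- The discriminant `Δ(τ) = g₂(τ)³ - 27 g₃(τ)²`. -/
def discC (τ : ℍ) : ℂ := g2C τ ^ 3 - 27 * g3C τ ^ 2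

/-- The Weierstrass `℘`-function relative to the lattice `L_τ = ℤτ + ℤ`. -/
def wpC (z : ℂ) (τ : ℍ) : ℂ :=
  (z ^ 2)⁻¹ + ∑' p : {p : ℤ × ℤ // p ≠ 0}, (((z - lat τ p.1) ^ 2)⁻¹ - ((lat τ p.1) ^ 2)⁻¹)

/-- The Fricke function `f_r(τ)`. -/
def fricke (r : ℚ × ℚ) (τ : ℍ) : ℂ :=
  -(2 ^ 7 * 3 ^ 5) * (g2C τ * g3C τ / discC τ) * wpC ((r.1 : ℂ) * τ + (r.2 : ℂ)) τ

/-- The elliptic modular `j`-invariant. -/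
def jinv (τ : ℍ) : ℂ := 1728 * g2C τ ^ 3 / discC τ

/-- The Dedekind eta function. -/
def etaC (τ : ℍ) : ℂ :=
  (Real.sqrt (2 * Real.pi) : ℂ) * Complex.exp (2 * (Real.pi : ℂ) * Complex.I / 16) *
    Complex.exp (2 * (Real.pi : ℂ) * Complex.I * τ / 24) *
    ∏' n : ℕ, (1 - Complex.exp (2 * (Real.pi : ℂ) * Complex.I * ((n : ℂ) + 1) * τ))

/-- `r ∈ ℚ² ∖ ℤ²`. -/
def NonIntegral (r : ℚ × ℚ) : Prop := ¬ ∃ a b : ℤ, r = ((a : ℚ), (b : ℚ))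

/-- `r ∈ (1/N)ℤ²`. -/
def InDen (N : ℕ) (r : ℚ × ℚ) : Prop := ∃ a b : ℤ, r = ((a : ℚ) / N, (b : ℚ) / N)

/-- Membership in `Γ^1(N)`: `a ≡ d ≡ 1` and `b ≡ 0 (mod N)`. -/
def GammaUpper (N : ℕ) (γ : SL(2, ℤ)) : Prop :=
  ((γ 0 0 : ℤ) : ZMod N) = 1 ∧ ((γ 1 1 : ℤ) : ZMod N) = 1 ∧ ((γ 0 1 : ℤ) : ZMod N) = 0

/-- The transpose action `ᵗγ r = (a r₁ + c r₂, b r₁ + d r₂)` of `γ = [[a,b],[c,d]]`. -/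
def tAct (γ : SL(2, ℤ)) (r : ℚ × ℚ) : ℚ × ℚ :=
  ((γ 0 0 : ℚ) * r.1 + (γ 1 0 : ℚ) * r.2, (γ 0 1 : ℚ) * r.1 + (γ 1 1 : ℚ) * r.2)

/-- The power `q^{n/d} = e^{2πi(n/d)τ}`. -/
def qpow (d : ℕ) (n : ℤ) (τ : ℍ) : ℂ :=
  Complex.exp (2 * (Real.pi : ℂ) * Complex.I * ((n : ℂ) / (d : ℂ)) * τ)

/-- `h` is a weakly holomorphic modular function for `Γ₁(N)` with rational
Fourier coefficients: holomorphic on `ℍ`, `Γ₁(N)`-invariant, with a convergent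
`q`-expansion at `i∞` having rational coefficients, and meromorphic at every cusp. -/
def IsWeaklyHolo1 (N : ℕ) (h : ℍ → ℂ) : Prop :=
  MDifferentiable 𝓘(ℂ) 𝓘(ℂ) h ∧
  (∀ γ ∈ Gamma1 N, ∀ τ : ℍ, h (γ • τ) = h τ) ∧
  (∃ n₀ : ℤ, ∃ c : ℕ → ℚ,
    ∀ τ : ℍ, HasSum (fun n : ℕ => (c n : ℂ) * qpow 1 (n₀ + n) τ) (h τ)) ∧
  (∀ γ : SL(2, ℤ), ∃ n₀ : ℤ, ∃ c : ℕ → ℂ,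
    ∀ τ : ℍ, HasSum (fun n : ℕ => c n * qpow N (n₀ + n) τ) (h (γ • τ)))

/-- `h` is a weakly holomorphic modular function for `Γ^1(N)` with rational
Fourier coefficients (the expansion at `i∞` being in powers of `q^{1/N}`). -/
def IsWeaklyHoloUp (N : ℕ) (h : ℍ → ℂ) : Prop :=
  MDifferentiable 𝓘(ℂ) 𝓘(ℂ) h ∧
  (∀ γ : SL(2, ℤ), GammaUpper N γ → ∀ τ : ℍ, h (γ • τ) = h τ) ∧
  (∃ n₀ : ℤ, ∃ c : ℕ → ℚ,
    ∀ τ : ℍ, HasSum (fun n : ℕ => (c n : ℂ) * qpow N (n₀ + n) τ) (h τ)) ∧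
  (∀ γ : SL(2, ℤ), ∃ n₀ : ℤ, ∃ c : ℕ → ℂ,
    ∀ τ : ℍ, HasSum (fun n : ℕ => c n * qpow N (n₀ + n) τ) (h (γ • τ)))

/-- The Weierstrass-unit generator
`f^1_{m,N} = (f_{(1/N,0)} - f_{(1/m,0)})/(f_{(2/m,0)} - f_{(1/m,0)})`. -/
def fUnit (m N : ℕ) (τ : ℍ) : ℂ :=
  (fricke ((1 : ℚ) / N, 0) τ - fricke ((1 : ℚ) / m, 0) τ) /
    (fricke ((2 : ℚ) / m, 0) τ - fricke ((1 : ℚ) / m, 0) τ)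

/-- `g^1_4 = g_{(1/2,0)}⁸ / g_{(1/4,0)}⁸`. -/
def gUp4 (τ : ℍ) : ℂ := siegel ((1 : ℚ) / 2, 0) τ ^ 8 / siegel ((1 : ℚ) / 4, 0) τ ^ 8

/-- The Euler product. -/
def eulerP (x : ℂ) : ℂ := ∏' n : ℕ, (1 - x ^ (n + 1))

/-- The odd Euler product. -/
def eulerO (x : ℂ) : ℂ := ∏' n : ℕ, (1 - x ^ (2 * n + 1))

lemma multipliable_arith {x : ℂ} (hx : ‖x‖ < 1) {a : ℕ} (ha : a ≠ 0) (b : ℕ) :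
    Multipliable fun n : ℕ => 1 - x ^ (a * n + b) := by
  have h1 : ‖x ^ a‖ < 1 := by
    rw [norm_pow]; exact pow_lt_one₀ (norm_nonneg _) hx ha
  have h2 : Summable fun n : ℕ => ‖-x ^ (a * n + b)‖ := by
    have := (summable_geometric_of_lt_one (norm_nonneg _) h1).mul_left (‖x ^ b‖)
    refine this.congr fun n => ?_
    rw [norm_neg, ← norm_pow, ← norm_mul]
    congr 1
    ring
  have := multipliable_one_add_of_summable h2
  simpa [sub_eq_add_neg] using this

lemma norm_sq_lt {x : ℂ} (hx : ‖x‖ < 1) : ‖x ^ 2‖ < 1 := by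
  rw [norm_pow]; exact pow_lt_one₀ (norm_nonneg _) hx two_ne_zero

lemma eulerP_eq {x : ℂ} (hx : ‖x‖ < 1) : eulerP x = eulerO x * eulerP (x ^ 2) := by
  have h1 := multipliable_arith hx two_ne_zero 1
  have h2 := multipliable_arith hx two_ne_zero 2
  have := tprod_even_mul_odd (f := fun n : ℕ => 1 - x ^ (n + 1)) h1 h2
  unfold eulerP eulerO
  rw [← this]
  congr 1
  refine tprod_congr fun n => ?_
  ring

lemma eulerO_mul_neg {x : ℂ} (hx : ‖x‖ < 1) : eulerO x * eulerO (-x) = eulerO (x ^ 2) := by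
  unfold eulerO
  rw [← (multipliable_arith hx two_ne_zero 1).tprod_mul
    (multipliable_arith (x := -x) (by simpa using hx) two_ne_zero 1)]
  refine tprod_congr fun n => ?_
  rw [Odd.neg_pow (odd_two_mul_add_one n)]
  ring

lemma eulerP_ne_zero {x : ℂ} (hx : ‖x‖ < 1) : eulerP x ≠ 0 := by
  unfold eulerP
  have := tprod_one_add_ne_zero_of_summable (f := fun n : ℕ => -x ^ (n + 1)) ?_ ?_
  · simpa [sub_eq_add_neg] using this
  · intro n h
    have h3 : x ^ (n + 1) = 1 := by linear_combination -h
    have h4 : ‖x ^ (n + 1)‖ < 1 := by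
      rw [norm_pow]; exact pow_lt_one₀ (norm_nonneg _) hx (by simp)
    rw [h3] at h4
    simp at h4
  · simpa using (summable_nat_add_iff 1).mpr (summable_geometric_of_lt_one (norm_nonneg _) hx)

lemma eulerO_ne_zero {x : ℂ} (hx : ‖x‖ < 1) : eulerO x ≠ 0 := by
  intro h
  have := eulerP_eq hx
  rw [h, zero_mul] at this
  exact eulerP_ne_zero hx this

lemma eulerP_triple {x : ℂ} (hx : ‖x‖ < 1) :
    eulerP (-x) * eulerP x * eulerP (x ^ 4) = eulerP (x ^ 2) ^ 3 := by
  have h1 := eulerP_eq hx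
  have h2 := eulerP_eq (x := -x) (by simpa using hx)
  have h3 := eulerP_eq (norm_sq_lt hx)
  have h4 := eulerO_mul_neg hx
  rw [neg_sq] at h2
  rw [← pow_mul] at h3
  norm_num at h3
  rw [h1, h2]
  linear_combination (eulerP (x ^ 2) ^ 2 * eulerP (x ^ 4)) * h4 - eulerP (x ^ 2) ^ 2 * h3

lemma eulerO_split {x : ℂ} (hx : ‖x‖ < 1) :
    eulerO x = (∏' n : ℕ, (1 - x ^ (4 * n + 1))) * ∏' n : ℕ, (1 - x ^ (4 * n + 3)) := by
  have h1 := multipliable_arith hx four_ne_zero 1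
  have h2 := multipliable_arith hx four_ne_zero 3
  have e1 : (fun k : ℕ => 1 - x ^ (2 * (2 * k) + 1)) = fun n : ℕ => 1 - x ^ (4 * n + 1) := by
    ext n; ring
  have e2 : (fun k : ℕ => 1 - x ^ (2 * (2 * k + 1) + 1)) = fun n : ℕ => 1 - x ^ (4 * n + 3) := by
    ext n; ring
  have := tprod_even_mul_odd (f := fun n : ℕ => 1 - x ^ (2 * n + 1))
    (by simpa only [e1] using h1) (by simpa only [e2] using h2)
  simp only [e1, e2] at this
  exact this.symm

lemma eulerP_tendsto : Filter.Tendsto eulerP (nhds 0) (nhds 1) := by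
  have h := (ModularForm.differentiableOn_tprod_one_sub_pow.differentiableAt
    (Metric.isOpen_ball.mem_nhds (Metric.mem_ball_self one_pos))).continuousAt.tendsto
  simp only [ne_eq, Nat.add_eq_zero_iff, one_ne_zero, and_false, not_false_eq_true, zero_pow, sub_zero, tprod_one] at h
  exact h

/-- `e^{πi w}`. -/
def xq (w : ℂ) : ℂ := Complex.exp (Real.pi * Complex.I * w)

lemma xq_norm {w : ℂ} (hw : 0 < w.im) : ‖xq w‖ < 1 := by
  rw [xq, Complex.norm_exp, Real.exp_lt_one_iff]
  simp
  positivity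

lemma eta_eq (z : ℂ) : ModularForm.eta z =
    Complex.exp (Real.pi * Complex.I * z / 12) * eulerP (xq (2 * z)) := by
  unfold ModularForm.eta eulerP xq
  simp only [ModularForm.eta_q, Function.Periodic.qParam]
  push_cast
  congr 2
  · ring
  · ext n; ring_nf

lemma xq_mul_nat (n : ℕ) (w : ℂ) : xq (n * w) = xq w ^ n := by
  unfold xq; rw [← Complex.exp_nat_mul]; ring_nf

lemma tprod_shift {x : ℂ} (hx : ‖x‖ < 1) (b : ℕ) :
    ∏' n : ℕ, (1 - x ^ (4 * n + b)) = (1 - x ^ b) * ∏' n : ℕ, (1 - x ^ (4 * n + (b + 4))) := by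
  have e : (fun n : ℕ => 1 - x ^ (4 * (n + 1) + b)) = fun n : ℕ => 1 - x ^ (4 * n + (b + 4)) := by
    ext n; ring
  rw [tprod_eq_zero_mul' (f := fun n : ℕ => 1 - x ^ (4 * n + b))]
  · simp only [e, mul_zero, zero_add]
  · simp only [e]
    exact multipliable_arith hx four_ne_zero _

lemma eulerO_sq (x : ℂ) : eulerO (x ^ 2) = ∏' n : ℕ, (1 - x ^ (4 * n + 2)) := by
  unfold eulerO
  refine tprod_congr fun n => ?_
  ring

lemma siegel_half (τ : ℍ) : siegel ((1 : ℚ) / 2, 0) τ =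
    -Complex.exp (-(Real.pi * Complex.I * τ / 12)) * eulerO (xq (τ / 2) ^ 2) ^ 2 := by
  have hx : ‖xq (τ / 2)‖ < 1 := xq_norm (by simpa using τ.2)
  have e0 : ∀ (k : ℕ) (u : ℂ), u = Real.pi * Complex.I * (k * (τ / 2)) →
      Complex.exp u = xq (τ / 2) ^ k := by
    intro k u hu; rw [hu, ← xq_mul_nat]; rfl
  have hp : ∀ n : ℕ, ((1 - Complex.exp (2 * (Real.pi : ℂ) * Complex.I *
          (((n : ℂ) + 1 + (((1 : ℚ) / 2 : ℚ) : ℂ)) * τ + ((0 : ℚ) : ℂ)))) *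
       (1 - Complex.exp (2 * (Real.pi : ℂ) * Complex.I *
          (((n : ℂ) + 1 - (((1 : ℚ) / 2 : ℚ) : ℂ)) * τ - ((0 : ℚ) : ℂ))))) =
      (1 - xq (τ / 2) ^ (4 * n + 6)) * (1 - xq (τ / 2) ^ (4 * n + 2)) := by
    intro n
    rw [e0 (4 * n + 6) _ (by push_cast; ring), e0 (4 * n + 2) _ (by push_cast; ring)]
  unfold siegel
  simp only [hp]
  rw [(multipliable_arith hx four_ne_zero 6).tprod_mul (multipliable_arith hx four_ne_zero 2),
    eulerO_sq, e0 2 (2 * _ * _ * _) (by push_cast; ring)]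
  have h2 := tprod_shift hx 2
  norm_num at h2
  have h3 : Complex.exp (Real.pi * Complex.I * ((0 : ℚ) : ℂ) * ((((1 : ℚ) / 2 : ℚ) : ℂ) - 1)) = 1 := by
    simp
  rw [h3]
  have h4 : (Real.pi : ℂ) * Complex.I * (((((1 : ℚ) / 2 : ℚ) : ℂ) ^ 2 - (((1 : ℚ) / 2 : ℚ) : ℂ) + 1 / 6) * τ)
      = -(Real.pi * Complex.I * τ / 12) := by
    push_cast; ring
  rw [h4]
  linear_combination (Complex.exp (-(Real.pi * Complex.I * τ / 12)) *
    ∏' n : ℕ, (1 - xq (τ / 2) ^ (4 * n + 2))) * h2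

lemma siegel_quarter (τ : ℍ) : siegel ((1 : ℚ) / 4, 0) τ =
    -Complex.exp (-(Real.pi * Complex.I * τ / 48)) * eulerO (xq (τ / 2)) := by
  have hx : ‖xq (τ / 2)‖ < 1 := xq_norm (by simpa using τ.2)
  have e0 : ∀ (k : ℕ) (u : ℂ), u = Real.pi * Complex.I * (k * (τ / 2)) →
      Complex.exp u = xq (τ / 2) ^ k := by
    intro k u hu; rw [hu, ← xq_mul_nat]; rfl
  have hp : ∀ n : ℕ, ((1 - Complex.exp (2 * (Real.pi : ℂ) * Complex.I *
          (((n : ℂ) + 1 + (((1 : ℚ) / 4 : ℚ) : ℂ)) * τ + ((0 : ℚ) : ℂ)))) *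
       (1 - Complex.exp (2 * (Real.pi : ℂ) * Complex.I *
          (((n : ℂ) + 1 - (((1 : ℚ) / 4 : ℚ) : ℂ)) * τ - ((0 : ℚ) : ℂ))))) =
      (1 - xq (τ / 2) ^ (4 * n + 5)) * (1 - xq (τ / 2) ^ (4 * n + 3)) := by
    intro n
    rw [e0 (4 * n + 5) _ (by push_cast; ring), e0 (4 * n + 3) _ (by push_cast; ring)]
  unfold siegel
  simp only [hp]
  rw [(multipliable_arith hx four_ne_zero 5).tprod_mul (multipliable_arith hx four_ne_zero 3),
    eulerO_split hx, e0 1 (2 * _ * _ * _) (by push_cast; ring)]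
  have h2 := tprod_shift hx 1
  norm_num at h2
  have h3 : Complex.exp (Real.pi * Complex.I * ((0 : ℚ) : ℂ) * ((((1 : ℚ) / 4 : ℚ) : ℂ) - 1)) = 1 := by
    simp
  rw [h3]
  have h4 : (Real.pi : ℂ) * Complex.I * (((((1 : ℚ) / 4 : ℚ) : ℂ) ^ 2 - (((1 : ℚ) / 4 : ℚ) : ℂ) + 1 / 6) * τ)
      = -(Real.pi * Complex.I * τ / 48) := by
    push_cast; ring
  rw [h4]
  linear_combination (Complex.exp (-(Real.pi * Complex.I * τ / 48)) *
    ∏' n : ℕ, (1 - xq (τ / 2) ^ (4 * n + 3))) * h2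

lemma gUp4_eq_euler (τ : ℍ) : gUp4 τ = (xq (τ / 2))⁻¹ * eulerP (xq (τ / 2) ^ 2) ^ 24 /
    (eulerP (xq (τ / 2) ^ 4) ^ 16 * eulerP (xq (τ / 2)) ^ 8) := by
  have hx : ‖xq (τ / 2)‖ < 1 := xq_norm (by simpa using τ.2)
  have hx2 := norm_sq_lt hx
  have hx4 := norm_sq_lt hx2
  have e1 := eulerP_eq hx
  have e2 := eulerP_eq hx2
  rw [← pow_mul] at e2 hx4
  norm_num only at e2 hx4
  have n1 := eulerO_ne_zero hx
  have n2 := eulerO_ne_zero hx2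
  have n3 := eulerP_ne_zero hx4
  unfold gUp4
  rw [siegel_half, siegel_quarter, e1, e2]
  have h1 : Complex.exp (-(Real.pi * Complex.I * τ / 12)) ^ 8 =
      Complex.exp (-(Real.pi * Complex.I * τ / 48)) ^ 8 * (xq (τ / 2))⁻¹ := by
    rw [xq, ← Complex.exp_neg, ← Complex.exp_nat_mul, ← Complex.exp_nat_mul, ← Complex.exp_add]
    push_cast; ring_nf
  have n4 := Complex.exp_ne_zero (-(Real.pi * Complex.I * τ / 48))
  have n5 : xq (τ / 2) ≠ 0 := Complex.exp_ne_zero _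
  have hE : ∀ y : ℂ, (-y) ^ 8 = y ^ 8 := fun y => by ring
  simp only [mul_pow, hE, h1]
  field_simp

/-- `θ₂⁴`. -/
def thA (w : ℍ) : ℂ := 16 * ModularForm.eta (2 * w) ^ 8 / ModularForm.eta w ^ 4
/-- `θ₄⁴`. -/
def thD (w : ℍ) : ℂ := ModularForm.eta (w / 2) ^ 8 / ModularForm.eta w ^ 4
/-- `θ₃⁴`. -/
def thB (w : ℍ) : ℂ := ModularForm.eta w ^ 20 /
  (ModularForm.eta (2 * w) ^ 8 * ModularForm.eta (w / 2) ^ 8)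

lemma im_two_mul_pos (w : ℍ) : 0 < (2 * (w : ℂ)).im := by
  simpa using w.2
lemma im_half_pos (w : ℍ) : 0 < ((w : ℂ) / 2).im := by
  simpa using w.2

lemma eta_ne (w : ℍ) : ModularForm.eta w ≠ 0 := ModularForm.eta_ne_zero w.2
lemma eta_two_ne (w : ℍ) : ModularForm.eta (2 * w) ≠ 0 := ModularForm.eta_ne_zero (im_two_mul_pos w)
lemma eta_half_ne (w : ℍ) : ModularForm.eta (w / 2) ≠ 0 := ModularForm.eta_ne_zero (im_half_pos w)

lemma thA_ne (w : ℍ) : thA w ≠ 0 :=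
  div_ne_zero (mul_ne_zero (by norm_num) (pow_ne_zero _ (eta_two_ne w))) (pow_ne_zero _ (eta_ne w))
lemma thD_ne (w : ℍ) : thD w ≠ 0 :=
  div_ne_zero (pow_ne_zero _ (eta_half_ne w)) (pow_ne_zero _ (eta_ne w))
lemma thB_ne (w : ℍ) : thB w ≠ 0 :=
  div_ne_zero (pow_ne_zero _ (eta_ne w))
    (mul_ne_zero (pow_ne_zero _ (eta_two_ne w)) (pow_ne_zero _ (eta_half_ne w)))

lemma thB_eq (w : ℍ) : thB w = 16 * ModularForm.eta w ^ 12 / (thA w * thD w) := by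
  have := eta_ne w
  have := eta_two_ne w
  have := eta_half_ne w
  unfold thA thB thD
  field_simp

lemma eta_S_pow {z : ℂ} (hz : 0 < z.im) :
    ModularForm.eta (-1 / z) ^ 4 = -z ^ 2 * ModularForm.eta z ^ 4 := by
  have h := ModularForm.eta_comp_eq_csqrt_I_inv hz
  simp only [Function.comp_apply, Pi.smul_apply, Pi.mul_apply, smul_eq_mul] at h
  have hs : ∀ u : ℂ, u ≠ 0 → Complex.sqrt u ^ 2 = u := by
    intro u hu
    rw [_root_.sqrt_eq_exp hu, ← Complex.exp_nat_mul]
    push_cast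
    rw [mul_div_cancel₀ _ (two_ne_zero), Complex.exp_log hu]
  have hz0 : z ≠ 0 := by rintro rfl; simp at hz
  have h1 := hs z hz0
  have h2 := hs Complex.I I_ne_zero
  have : ModularForm.eta (-1 / z) ^ 4 =
      ((Complex.sqrt Complex.I ^ 2) ^ 2)⁻¹ * ((Complex.sqrt z ^ 2) ^ 2 * ModularForm.eta z ^ 4) := by
    rw [h]; ring
  rw [this, h1, h2, I_sq]
  norm_num

lemma eta_T_pow (z : ℂ) : ModularForm.eta (z + 1) ^ 4 =
    Complex.exp (Real.pi * Complex.I / 3) * ModularForm.eta z ^ 4 := by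
  have hx : xq (2 * (z + 1)) = xq (2 * z) := by
    unfold xq
    rw [show (Real.pi : ℂ) * Complex.I * (2 * (z + 1)) =
      Real.pi * Complex.I * (2 * z) + 2 * Real.pi * Complex.I by ring, Complex.exp_add,
      Complex.exp_two_pi_mul_I, mul_one]
  rw [eta_eq, eta_eq, hx, mul_pow, mul_pow, ← mul_assoc, ← Complex.exp_nat_mul,
    ← Complex.exp_nat_mul, ← Complex.exp_add]
  push_cast
  ring_nf

/-- The cube root of `-1`. -/
lemma om_cube : Complex.exp (Real.pi * Complex.I / 3) ^ 3 = -1 := by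
  rw [← Complex.exp_nat_mul]
  push_cast
  rw [mul_div_cancel₀ _ (three_ne_zero), Complex.exp_pi_mul_I]

lemma coe_S (w : ℍ) : ((ModularGroup.S • w : ℍ) : ℂ) = -1 / w := by
  rw [UpperHalfPlane.modular_S_smul]
  simp [neg_div, inv_neg]

lemma coe_T (w : ℍ) : ((ModularGroup.T • w : ℍ) : ℂ) = w + 1 := by
  rw [UpperHalfPlane.modular_T_smul]
  simp [add_comm]

lemma thA_S (w : ℍ) : thA (ModularGroup.S • w) = -w ^ 2 * thD w := by
  have h0 := w.ne_zero
  have := eta_ne w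
  unfold thA thD
  rw [coe_S, eta_S_pow w.2]
  have h1 := eta_S_pow (im_half_pos w)
  rw [show (2 : ℂ) * (-1 / w) = -1 / (w / 2) by field_simp, show 8 = 4 * 2 by norm_num,
    pow_mul, h1]
  field_simp
  ring

lemma thD_S (w : ℍ) : thD (ModularGroup.S • w) = -w ^ 2 * thA w := by
  have h0 := w.ne_zero
  have := eta_ne w
  unfold thA thD
  rw [coe_S, eta_S_pow w.2]
  have h1 := eta_S_pow (im_two_mul_pos w)
  rw [show (-1 / (w : ℂ)) / 2 = -1 / (2 * w) by field_simp, show 8 = 4 * 2 by norm_num,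
    pow_mul, h1]
  field_simp
  ring

lemma thB_S (w : ℍ) : thB (ModularGroup.S • w) = -w ^ 2 * thB w := by
  have h0 := w.ne_zero
  have := eta_ne w
  have := thA_ne w
  have := thD_ne w
  rw [thB_eq, thB_eq, thA_S, thD_S, coe_S, show 12 = 4 * 3 by norm_num, pow_mul, pow_mul,
    eta_S_pow w.2]
  field_simp

lemma thA_T (w : ℍ) : thA (ModularGroup.T • w) = - thA w := by
  have := eta_ne w
  have ho := om_cube
  have hn : Complex.exp (Real.pi * Complex.I / 3) ≠ 0 := Complex.exp_ne_zero _
  unfold thA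
  rw [coe_T, eta_T_pow, show (2 : ℂ) * (w + 1) = 2 * w + 1 + 1 by ring, show 8 = 4 * 2 by norm_num,
    pow_mul, eta_T_pow, eta_T_pow]
  field_simp
  linear_combination (ModularForm.eta (2 * w) ^ 8) * ho

lemma eta_euler (w : ℂ) : ModularForm.eta w =
    Complex.exp (Real.pi * Complex.I * w / 12) * eulerP (xq w ^ 2) := by
  rw [eta_eq, ← xq_mul_nat]; norm_num

lemma eta_two_euler (w : ℂ) : ModularForm.eta (2 * w) =
    Complex.exp (Real.pi * Complex.I * w / 12) ^ 2 * eulerP (xq w ^ 4) := by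
  rw [eta_eq, ← xq_mul_nat, ← Complex.exp_nat_mul]
  push_cast; ring_nf

lemma eta_half_euler (w : ℂ) : ModularForm.eta (w / 2) ^ 8 =
    Complex.exp (Real.pi * Complex.I * w / 12) ^ 4 * eulerP (xq w) ^ 8 := by
  rw [eta_eq, mul_pow, ← Complex.exp_nat_mul, ← Complex.exp_nat_mul]
  push_cast; ring_nf

lemma xq_add_one (w : ℂ) : xq (w + 1) = - xq w := by
  unfold xq
  rw [mul_add, Complex.exp_add, mul_one, Complex.exp_pi_mul_I]; ring

lemma thD_T (w : ℍ) : thD (ModularGroup.T • w) = thB w := by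
  have hx := xq_norm w.2
  have h := eulerP_triple hx
  have hn : Complex.exp (Real.pi * Complex.I / 3) ≠ 0 := Complex.exp_ne_zero _
  have hx2 := norm_sq_lt hx
  have hx4 := norm_sq_lt hx2
  rw [← pow_mul] at hx4
  norm_num only at hx4
  have n1 := eulerP_ne_zero hx
  have n2 := eulerP_ne_zero hx2
  have n4 := eulerP_ne_zero hx4
  have n5 := Complex.exp_ne_zero (Real.pi * Complex.I * w / 12)
  unfold thD thB
  rw [coe_T, eta_T_pow, eta_half_euler, eta_half_euler, eta_two_euler, eta_euler, xq_add_one]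
  have he : Complex.exp (Real.pi * Complex.I * (w + 1) / 12) ^ 4 =
    Complex.exp (Real.pi * Complex.I / 3) * Complex.exp (Real.pi * Complex.I * w / 12) ^ 4 := by
    rw [← Complex.exp_nat_mul, ← Complex.exp_nat_mul, ← Complex.exp_add]
    push_cast; ring_nf
  rw [he]
  have h8 : eulerP (-xq w) ^ 8 * eulerP (xq w) ^ 8 * eulerP (xq w ^ 4) ^ 8 =
      eulerP (xq w ^ 2) ^ 24 := by
    rw [← mul_pow, ← mul_pow, h]; ring
  field_simp
  linear_combination h8

lemma thB_T (w : ℍ) : thB (ModularGroup.T • w) = thD w := by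
  have := eta_ne w
  have := thA_ne w
  have := thD_ne w
  have hb := thB_ne w
  have e := thB_eq w
  have ho := om_cube
  rw [thB_eq, thA_T, thD_T, coe_T, show 12 = 4 * 3 by norm_num, pow_mul, eta_T_pow, mul_pow, ho]
  rw [eq_div_iff (by positivity)] at e
  rw [div_eq_iff (by simp [*])]
  linear_combination e

lemma gUp4_eq (τ w : ℍ) (h : (τ : ℂ) = 2 * w) : gUp4 τ = 16 * thB w / thA w := by
  rw [gUp4_eq_euler]
  have hw : (τ : ℂ) / 2 = w := by rw [h]; ring
  have hx := xq_norm w.2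
  have hx2 := norm_sq_lt hx
  have hx4 := norm_sq_lt hx2
  rw [← pow_mul] at hx4
  norm_num only at hx4
  have n1 := eulerP_ne_zero hx
  have n2 := eulerP_ne_zero hx2
  have n4 := eulerP_ne_zero hx4
  have n5 := Complex.exp_ne_zero (Real.pi * Complex.I * w / 12)
  unfold thA thB
  rw [hw, eta_half_euler, eta_two_euler, eta_euler]
  have h1 : xq w = Complex.exp (Real.pi * Complex.I * w / 12) ^ 12 := by
    rw [← Complex.exp_nat_mul, xq]; push_cast; ring_nf
  nth_rewrite 1 [h1]
  field_simp

lemma xq_tendsto : Filter.Tendsto (fun w : ℍ => xq w) atImInfty (nhds 0) := by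
  have := UpperHalfPlane.qParam_tendsto_atImInfty (h := 2) two_pos
  refine this.congr fun w => ?_
  unfold xq Function.Periodic.qParam
  push_cast; ring_nf

lemma eulerP_xq_tendsto (k : ℕ) (hk : k ≠ 0) :
    Filter.Tendsto (fun w : ℍ => eulerP (xq w ^ k)) atImInfty (nhds 1) := by
  have := xq_tendsto.pow k
  rw [zero_pow hk] at this
  exact eulerP_tendsto.comp this

lemma thA_tendsto : Filter.Tendsto thA atImInfty (nhds 0) := by
  have h := ((xq_tendsto.const_mul 16).mul ((eulerP_xq_tendsto 4 (by norm_num)).pow 8)).div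
    ((eulerP_xq_tendsto 2 (by norm_num)).pow 4) (by norm_num)
  simp only [mul_zero, zero_mul, zero_div] at h
  refine h.congr fun w => ?_
  have n5 := Complex.exp_ne_zero (Real.pi * Complex.I * w / 12)
  have n2 := eulerP_ne_zero (norm_sq_lt (xq_norm w.2))
  unfold thA
  rw [eta_two_euler, eta_euler]
  have h1 : xq w = Complex.exp (Real.pi * Complex.I * w / 12) ^ 12 := by
    rw [← Complex.exp_nat_mul, xq]; push_cast; ring_nf
  simp only [Pi.div_apply]
  nth_rewrite 1 [h1]
  field_simp

lemma thD_tendsto : Filter.Tendsto thD atImInfty (nhds 1) := by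
  have h := ((eulerP_xq_tendsto 1 (by norm_num)).pow 8).div
    ((eulerP_xq_tendsto 2 (by norm_num)).pow 4) (by norm_num)
  simp only [one_pow, div_one, pow_one] at h
  refine h.congr fun w => ?_
  have n5 := Complex.exp_ne_zero (Real.pi * Complex.I * w / 12)
  have n2 := eulerP_ne_zero (norm_sq_lt (xq_norm w.2))
  unfold thD
  rw [eta_half_euler, eta_euler]
  simp only [Pi.div_apply]
  field_simp

lemma thB_tendsto : Filter.Tendsto thB atImInfty (nhds 1) := by
  have h := ((eulerP_xq_tendsto 2 (by norm_num)).pow 20).div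
    (((eulerP_xq_tendsto 4 (by norm_num)).pow 8).mul ((eulerP_xq_tendsto 1 (by norm_num)).pow 8))
    (by norm_num)
  simp only [one_pow, div_one, pow_one, mul_one] at h
  refine h.congr fun w => ?_
  have hx := xq_norm w.2
  have hx2 := norm_sq_lt hx
  have hx4 := norm_sq_lt hx2
  rw [← pow_mul] at hx4
  norm_num only at hx4
  have n1 := eulerP_ne_zero hx
  have n2 := eulerP_ne_zero hx2
  have n4 := eulerP_ne_zero hx4
  have n5 := Complex.exp_ne_zero (Real.pi * Complex.I * w / 12)
  unfold thB
  rw [eta_half_euler, eta_two_euler, eta_euler]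
  simp only [Pi.div_apply]
  field_simp

lemma mdiff_eta_mul (r : ℝ) (hr : 0 < r) :
    MDifferentiable 𝓘(ℂ) 𝓘(ℂ) (fun w : ℍ => ModularForm.eta (r * w)) := by
  rw [UpperHalfPlane.mdifferentiable_iff]
  intro z hz
  have hz' : 0 < ((r : ℂ) * z).im := by
    simpa using mul_pos hr hz
  have h1 : DifferentiableAt ℂ (fun z : ℂ => ModularForm.eta (r * z)) z :=
    (ModularForm.differentiableAt_eta_of_mem_upperHalfPlaneSet hz').comp z (by fun_prop)
  refine (h1.differentiableWithinAt).congr (fun y hy => ?_) ?_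
  · simp [ofComplex_apply_of_im_pos hy]
  · simp [ofComplex_apply_of_im_pos hz]

lemma mdiff_iff' {f : ℍ → ℂ} : MDifferentiable 𝓘(ℂ) 𝓘(ℂ) f ↔
    DifferentiableOn ℂ (f ∘ ofComplex) {z : ℂ | 0 < z.im} := UpperHalfPlane.mdifferentiable_iff

lemma mdiff_div {f g : ℍ → ℂ} (hf : MDifferentiable 𝓘(ℂ) 𝓘(ℂ) f)
    (hg : MDifferentiable 𝓘(ℂ) 𝓘(ℂ) g) (h0 : ∀ w, g w ≠ 0) :
    MDifferentiable 𝓘(ℂ) 𝓘(ℂ) (fun w => f w / g w) := by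
  rw [mdiff_iff'] at *
  exact hf.div hg fun z _ => h0 _

lemma mdiff_mul {f g : ℍ → ℂ} (hf : MDifferentiable 𝓘(ℂ) 𝓘(ℂ) f)
    (hg : MDifferentiable 𝓘(ℂ) 𝓘(ℂ) g) :
    MDifferentiable 𝓘(ℂ) 𝓘(ℂ) (fun w => f w * g w) := by
  rw [mdiff_iff'] at *
  exact hf.mul hg

lemma mdiff_add {f g : ℍ → ℂ} (hf : MDifferentiable 𝓘(ℂ) 𝓘(ℂ) f)
    (hg : MDifferentiable 𝓘(ℂ) 𝓘(ℂ) g) :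
    MDifferentiable 𝓘(ℂ) 𝓘(ℂ) (fun w => f w + g w) := by
  rw [mdiff_iff'] at *
  exact hf.add hg

lemma mdiff_sub {f g : ℍ → ℂ} (hf : MDifferentiable 𝓘(ℂ) 𝓘(ℂ) f)
    (hg : MDifferentiable 𝓘(ℂ) 𝓘(ℂ) g) :
    MDifferentiable 𝓘(ℂ) 𝓘(ℂ) (fun w => f w - g w) := by
  rw [mdiff_iff'] at *
  exact hf.sub hg

lemma mdiff_pow {f : ℍ → ℂ} (hf : MDifferentiable 𝓘(ℂ) 𝓘(ℂ) f) (n : ℕ) :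
    MDifferentiable 𝓘(ℂ) 𝓘(ℂ) (fun w => f w ^ n) := by
  rw [mdiff_iff'] at *
  exact hf.pow n

lemma mdiff_const (c : ℂ) : MDifferentiable 𝓘(ℂ) 𝓘(ℂ) (fun _ : ℍ => c) := by
  rw [mdiff_iff']
  exact differentiableOn_const c

lemma mdiff_eta : MDifferentiable 𝓘(ℂ) 𝓘(ℂ) (fun w : ℍ => ModularForm.eta w) := by
  simpa using mdiff_eta_mul 1 one_pos
lemma mdiff_eta_two : MDifferentiable 𝓘(ℂ) 𝓘(ℂ) (fun w : ℍ => ModularForm.eta (2 * w)) := by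
  simpa using mdiff_eta_mul 2 two_pos
lemma mdiff_eta_half : MDifferentiable 𝓘(ℂ) 𝓘(ℂ) (fun w : ℍ => ModularForm.eta (w / 2)) := by
  simpa [div_eq_inv_mul] using mdiff_eta_mul (2⁻¹) (by norm_num)

lemma mdiff_thA : MDifferentiable 𝓘(ℂ) 𝓘(ℂ) thA :=
  mdiff_div (mdiff_mul (mdiff_const 16) (mdiff_pow mdiff_eta_two 8)) (mdiff_pow mdiff_eta 4)
    fun w => pow_ne_zero _ (eta_ne w)
lemma mdiff_thD : MDifferentiable 𝓘(ℂ) 𝓘(ℂ) thD :=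
  mdiff_div (mdiff_pow mdiff_eta_half 8) (mdiff_pow mdiff_eta 4)
    fun w => pow_ne_zero _ (eta_ne w)
lemma mdiff_thB : MDifferentiable 𝓘(ℂ) 𝓘(ℂ) thB :=
  mdiff_div (mdiff_pow mdiff_eta 20) (mdiff_mul (mdiff_pow mdiff_eta_two 8)
    (mdiff_pow mdiff_eta_half 8))
    fun w => mul_ne_zero (pow_ne_zero _ (eta_two_ne w)) (pow_ne_zero _ (eta_half_ne w))

open scoped ModularForm in
lemma slash_all {f : ℍ → ℂ} {k : ℤ}
    (hS : ∀ w : ℍ, f (ModularGroup.S • w) = (w : ℂ) ^ k * f w)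
    (hT : ∀ w : ℍ, f (ModularGroup.T • w) = f w) (γ : SL(2, ℤ)) : f ∣[k] γ = f := by
  refine SlashInvariantForm.slash_action_generators_SL2Z ?_ ?_ γ
  · ext w
    rw [ModularForm.SL_slash_apply, ModularGroup.denom_S, hS, _root_.zpow_neg]
    have := w.ne_zero
    field_simp
  · ext w
    rw [ModularForm.SL_slash_apply, hT]
    rw [ModularGroup.denom_apply]
    simp [ModularGroup.T]

/-- The modular form attached to transformation laws. -/
def mkMF {f : ℍ → ℂ} {k : ℤ} {l : ℂ} (hf : MDifferentiable 𝓘(ℂ) 𝓘(ℂ) f)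
    (hS : ∀ w : ℍ, f (ModularGroup.S • w) = (w : ℂ) ^ k * f w)
    (hT : ∀ w : ℍ, f (ModularGroup.T • w) = f w)
    (hl : Filter.Tendsto f atImInfty (nhds l)) : ModularForm 𝒮ℒ k where
  toFun := f
  slash_action_eq' A hA := by
    obtain ⟨A, rfl⟩ := hA
    exact slash_all hS hT A
  holo' := hf
  bdd_at_cusps' hc := by
    rw [Subgroup.IsArithmetic.isCusp_iff_isCusp_SL2Z] at hc
    rw [OnePoint.isBoundedAt_iff_forall_SL2Z hc]
    intro γ _
    rw [slash_all hS hT]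
    exact hl.isBigO_one ℝ

/-- The cusp form attached to transformation laws. -/
def mkCF {f : ℍ → ℂ} {k : ℤ} (hf : MDifferentiable 𝓘(ℂ) 𝓘(ℂ) f)
    (hS : ∀ w : ℍ, f (ModularGroup.S • w) = (w : ℂ) ^ k * f w)
    (hT : ∀ w : ℍ, f (ModularGroup.T • w) = f w)
    (hl : Filter.Tendsto f atImInfty (nhds 0)) : CuspForm 𝒮ℒ k where
  toFun := f
  slash_action_eq' A hA := by
    obtain ⟨A, rfl⟩ := hA
    exact slash_all hS hT A
  holo' := hf
  zero_at_cusps' hc := by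
    rw [Subgroup.IsArithmetic.isCusp_iff_isCusp_SL2Z] at hc
    rw [OnePoint.isZeroAt_iff_forall_SL2Z hc]
    intro γ _
    rw [slash_all hS hT]
    exact hl

/-- The Jacobi identity. -/
lemma jacobi_id (w : ℍ) : thA w + thD w = thB w := by
  let F : CuspForm 𝒮ℒ 4 := mkCF (k := 4) (f := fun w => (thA w + thD w - thB w) ^ 2)
    (mdiff_pow (mdiff_sub (mdiff_add mdiff_thA mdiff_thD) mdiff_thB) 2)
    (fun w => by rw [thA_S, thD_S, thB_S, show ((w : ℂ) ^ (4 : ℤ)) = (w : ℂ) ^ 4 from by norm_cast]; ring)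
    (fun w => by rw [thA_T, thD_T, thB_T]; ring)
    (by
      have := ((thA_tendsto.add thD_tendsto).sub thB_tendsto).pow 2
      norm_num at this
      exact this)
  have hF : F = 0 := rank_zero_iff_forall_zero.mp
    (CuspForm.rank_eq_zero_of_weight_lt_twelve (by norm_num)) F
  have h1 : F w = 0 := by rw [hF]; rfl
  have h2 : (thA w + thD w - thB w) ^ 2 = 0 := h1
  have := pow_eq_zero_iff (two_ne_zero) |>.mp h2
  linear_combination this

lemma surj_aux (m : ℂ) (h0 : m ≠ 0) (h1 : m ≠ 1) : ∃ w : ℍ, thB w = m * thA w := by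
  by_contra! hcon
  have a1 : ∀ w, thB w - m * thA w ≠ 0 := fun w => sub_ne_zero.mpr (hcon w)
  have hw : ∀ w : ℍ, -(w : ℂ) ^ 2 ≠ 0 := fun w => neg_ne_zero.mpr (pow_ne_zero _ w.ne_zero)
  have a2 : ∀ w, thB w - m * thD w ≠ 0 := fun w h => a1 (ModularGroup.S • w) (by
    rw [thB_S, thA_S]; linear_combination (-(w : ℂ) ^ 2) * h)
  have a3 : ∀ w, thD w + m * thA w ≠ 0 := fun w h => a1 (ModularGroup.T • w) (by
    rw [thB_T, thA_T]; linear_combination h)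
  have a4 : ∀ w, thD w - m * thB w ≠ 0 := fun w h => a2 (ModularGroup.T • w) (by
    rw [thB_T, thD_T]; linear_combination h)
  have a5 : ∀ w, thA w + m * thD w ≠ 0 := fun w h => a3 (ModularGroup.S • w) (by
    rw [thA_S, thD_S]; linear_combination (-(w : ℂ) ^ 2) * h)
  have a6 : ∀ w, thA w - m * thB w ≠ 0 := fun w h => a4 (ModularGroup.S • w) (by
    rw [thB_S, thD_S]; linear_combination (-(w : ℂ) ^ 2) * h)
  let H : ℍ → ℂ := fun w => (thB w - m * thA w) * (thB w - m * thD w) * (thD w + m * thA w) *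
    (thD w - m * thB w) * (thA w + m * thD w) * (thA w - m * thB w)
  have hH : ∀ w, H w ≠ 0 := fun w => by
    simp only [H, ne_eq, mul_eq_zero, not_or]
    exact ⟨⟨⟨⟨⟨a1 w, a2 w⟩, a3 w⟩, a4 w⟩, a5 w⟩, a6 w⟩
  have c := mdiff_const m
  have hd : MDifferentiable 𝓘(ℂ) 𝓘(ℂ) H :=
    mdiff_mul (mdiff_mul (mdiff_mul (mdiff_mul (mdiff_mul
      (mdiff_sub mdiff_thB (mdiff_mul c mdiff_thA)) (mdiff_sub mdiff_thB (mdiff_mul c mdiff_thD)))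
      (mdiff_add mdiff_thD (mdiff_mul c mdiff_thA))) (mdiff_sub mdiff_thD (mdiff_mul c mdiff_thB)))
      (mdiff_add mdiff_thA (mdiff_mul c mdiff_thD))) (mdiff_sub mdiff_thA (mdiff_mul c mdiff_thB))
  have tA := thA_tendsto
  have tB := thB_tendsto
  have tD := thD_tendsto
  have hlim := (((((tB.sub (tA.const_mul m)).mul (tB.sub (tD.const_mul m))).mul
    (tD.add (tA.const_mul m))).mul (tD.sub (tB.const_mul m))).mul (tA.add (tD.const_mul m))).mul
    (tA.sub (tB.const_mul m))
  have hne : (1 - m * 0) * (1 - m * 1) * (1 + m * 0) * (1 - m * 1) * (0 + m * 1) * (0 - m * 1) ≠ 0 := by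
    have : 1 - m ≠ 0 := sub_ne_zero.mpr h1.symm
    simp [h0, this]
  have hlim' := hlim.inv₀ hne
  let F : ModularForm 𝒮ℒ (-12) := mkMF (k := -12) (f := fun w => (H w)⁻¹)
    (by simpa using mdiff_div (mdiff_const 1) hd hH)
    (fun w => by
      have hS : H (ModularGroup.S • w) = (w : ℂ) ^ 12 * H w := by
        simp only [H]; rw [thA_S, thD_S, thB_S]; ring
      rw [hS, mul_inv, _root_.zpow_neg]
      norm_cast)
    (fun w => by
      have hT : H (ModularGroup.T • w) = H w := by
        simp only [H]; rw [thA_T, thD_T, thB_T]; ring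
      rw [hT])
    hlim'
  have hF := ModularFormClass.levelOne_neg_weight_eq_zero (by norm_num) F
  have h2 : (H UpperHalfPlane.I)⁻¹ = 0 := congrFun hF UpperHalfPlane.I
  exact hH _ (inv_eq_zero.mp h2)

lemma gUp4_eq_eta (τ : ℍ) :
    gUp4 τ = 16 * thB ⟨τ / 2, im_half_pos τ⟩ / thA ⟨τ / 2, im_half_pos τ⟩ :=
  gUp4_eq τ _ (by simp only []; ring)

lemma mdiff_gUp4 : MDifferentiable 𝓘(ℂ) 𝓘(ℂ) gUp4 := by
  have h4 : ∀ τ : ℍ, ModularForm.eta (((4⁻¹ : ℝ) : ℂ) * τ) ≠ 0 := fun τ =>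
    ModularForm.eta_ne_zero (by
      change 0 < (((4⁻¹ : ℝ) : ℂ) * τ).im
      rw [Complex.im_ofReal_mul]
      exact mul_pos (by norm_num) τ.2)
  have h := mdiff_div (mdiff_pow mdiff_eta_half 24)
    (mdiff_mul (mdiff_pow mdiff_eta 16) (mdiff_pow (mdiff_eta_mul (4⁻¹) (by norm_num)) 8))
    (fun w => mul_ne_zero (pow_ne_zero _ (eta_ne w)) (pow_ne_zero _ (h4 w)))
  convert h using 1
  ext τ
  rw [gUp4_eq_eta]
  unfold thA thB
  simp only []
  have n1 := eta_half_ne τ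
  have n2 := eta_ne τ
  have n3 := h4 τ
  rw [show 2 * ((τ : ℂ) / 2) = τ by ring,
    show (τ : ℂ) / 2 / 2 = ((4⁻¹ : ℝ) : ℂ) * τ by push_cast; ring]
  field_simp

lemma range_gUp4 : Set.range gUp4 = ({0, 16} : Set ℂ)ᶜ := by
  ext c
  simp only [Set.mem_range, Set.mem_compl_iff, Set.mem_insert_iff, Set.mem_singleton_iff, not_or]
  constructor
  · rintro ⟨τ, rfl⟩
    rw [gUp4_eq_eta]
    set w : ℍ := ⟨τ / 2, im_half_pos τ⟩
    have hA := thA_ne w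
    have hB := thB_ne w
    have hD := thD_ne w
    have hJ := jacobi_id w
    constructor
    · exact div_ne_zero (mul_ne_zero (by norm_num) hB) hA
    · intro h
      rw [div_eq_iff hA] at h
      exact hD (by linear_combination hJ + h / 16)
  · rintro ⟨h0, h16⟩
    obtain ⟨w, hw⟩ := surj_aux (c / 16) (by simpa using h0) (by
      intro h; apply h16; linear_combination 16 * h)
    refine ⟨⟨2 * w, im_two_mul_pos w⟩, ?_⟩
    rw [gUp4_eq _ w rfl, hw]
    have hA := thA_ne w
    field_simp

/-- `g^1_4` is holomorphic on `ℍ` and `g^1_4 - c` has no zeros on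
`ℍ` iff `c ∈ {0, 16}`; equivalently, the range of `g^1_4` is `ℂ ∖ {0, 16}`. -/
theorem statement12 :
    MDifferentiable 𝓘(ℂ) 𝓘(ℂ) gUp4 ∧
    (∀ c : ℂ, (∀ τ : ℍ, gUp4 τ - c ≠ 0) ↔ (c = 0 ∨ c = 16)) ∧
    Set.range gUp4 = ({0, 16} : Set ℂ)ᶜ := by
  refine ⟨mdiff_gUp4, fun c => ?_, range_gUp4⟩
  have h : c ∈ Set.range gUp4 ↔ c ∈ ({0, 16} : Set ℂ)ᶜ := by rw [range_gUp4]
  simp only [Set.mem_range, Set.mem_compl_iff, Set.mem_insert_iff, Set.mem_singleton_iff] at h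
  simp only [ne_eq, sub_eq_zero]
  rw [← not_exists, h, not_not]
end
end

section
/- Define g^1_6(τ) = g_{(1/2,0)}(τ)³ / g_{(1/6,0)}(τ)³ for τ ∈ ℍ. Then g^1_6 is holomorphic on ℍ and, for c ∈ ℂ, the function g^1_6(τ) − c has no zeros on ℍ if and only if c ∈ {0, 8, −1}; equivalently, the set of values taken by g^1_6 on ℍ is exactly ℂ∖{0, 8, −1}. -/
open Complex UpperHalfPlane Matrix MatrixGroups CongruenceSubgroup
open scoped UpperHalfPlane Manifold Real

noncomputable section

/-- `g^1_6 = g_{(1/2,0)}³ / g_{(1/6,0)}³`. -/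
def gUp6 (τ : ℍ) : ℂ := siegel ((1 : ℚ) / 2, 0) τ ^ 3 / siegel ((1 : ℚ) / 6, 0) τ ^ 3

lemma s13_exp_eq_neg {a b : ℂ} (h : a = b + π * Complex.I) : cexp a = -cexp b := by
  rw [h, Complex.exp_add, Complex.exp_pi_mul_I]; ring

lemma s13_exp_eq {a b : ℂ} (n : ℤ) (h : a = b + n * (2 * π * Complex.I)) : cexp a = cexp b := by
  rw [h, Complex.exp_add, Complex.exp_int_mul_two_pi_mul_I, mul_one]

/-- The odd theta function. -/
def th (z τ : ℂ) : ℂ := cexp (-π * Complex.I * z + π * Complex.I * τ / 4) * jacobiTheta₂ (z + 1 / 2 - τ / 2) τ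

lemma th_neg (z τ : ℂ) : th (-z) τ = -th z τ := by
  unfold th
  have h1 : jacobiTheta₂ (-z + 1 / 2 - τ / 2) τ
      = cexp (-π * Complex.I * (τ + 2 * (z - 1 / 2 - τ / 2))) * jacobiTheta₂ (z + 1 / 2 - τ / 2) τ := by
    rw [← jacobiTheta₂_neg_left]
    have : z + 1 / 2 - τ / 2 = (z - 1 / 2 - τ / 2) + 1 := by ring
    rw [this, jacobiTheta₂_add_left, ← jacobiTheta₂_add_left']
    congr 1; ring
  rw [h1, ← mul_assoc, ← Complex.exp_add, ← neg_mul]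
  congr 1
  apply s13_exp_eq_neg; ring

lemma th_add_one (z τ : ℂ) : th (z + 1) τ = -th z τ := by
  unfold th
  have : z + 1 + 1 / 2 - τ / 2 = (z + 1 / 2 - τ / 2) + 1 := by ring
  rw [this, jacobiTheta₂_add_left, ← neg_mul, ← neg_neg (cexp (-π * Complex.I * (z + 1) + π * Complex.I * τ / 4))]
  congr 2
  symm
  apply s13_exp_eq_neg; ring

lemma th_add_tau (z τ : ℂ) : th (z + τ) τ = -(cexp (-π * Complex.I * τ - 2 * π * Complex.I * z) * th z τ) := by
  unfold th
  have : z + τ + 1 / 2 - τ / 2 = (z + 1 / 2 - τ / 2) + τ := by ring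
  rw [this, jacobiTheta₂_add_left', ← mul_assoc, ← mul_assoc, ← neg_mul, ← Complex.exp_add,
    ← Complex.exp_add, ← neg_neg (cexp (-π * Complex.I * (z + τ) + π * Complex.I * τ / 4 + _))]
  congr 2
  symm
  apply s13_exp_eq_neg; ring

lemma jt_T (z τ : ℂ) : jacobiTheta₂ z (τ + 1) = jacobiTheta₂ (z + 1 / 2) τ := by
  refine tsum_congr (fun n ↦ ?_)
  simp only [jacobiTheta₂_term]
  obtain ⟨k, hk⟩ := Int.even_mul_pred_self n
  apply s13_exp_eq k
  have : (n : ℂ) * (n - 1) = k + k := by exact_mod_cast hk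
  linear_combination π * Complex.I * this

lemma th_T (z τ : ℂ) : th z (τ + 1) = cexp (π * Complex.I / 4) * th z τ := by
  unfold th
  rw [jt_T, ← mul_assoc, ← Complex.exp_add]
  congr 2 <;> ring

lemma th_S {τ : ℂ} (hτ : 0 < τ.im) : ∃ κ : ℂ, κ ≠ 0 ∧
    ∀ z, th (z / τ) (-1 / τ) = κ * (cexp (π * Complex.I * z ^ 2 / τ) * th z τ) := by
  have h0 : τ ≠ 0 := by rintro rfl; simp at hτ
  have hI : -Complex.I * τ ≠ 0 := by simp [h0]
  have hp : (-Complex.I * τ) ^ (1 / 2 : ℂ) ≠ 0 := by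
    rw [Complex.cpow_def_of_ne_zero hI]; exact Complex.exp_ne_zero _
  refine ⟨-Complex.I * (-Complex.I * τ) ^ (1 / 2 : ℂ), mul_ne_zero (by simp) hp, fun z => ?_⟩
  have h1 := jacobiTheta₂_functional_equation (z + 1 / 2 - τ / 2 + τ) τ
  rw [jacobiTheta₂_add_left'] at h1
  have h2 : z / τ + 1 / 2 - -1 / τ / 2 = (z + 1 / 2 - τ / 2 + τ) / τ := by field_simp; ring
  unfold th
  rw [h2]
  set X := jacobiTheta₂ ((z + 1 / 2 - τ / 2 + τ) / τ) (-1 / τ)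
  set Y := jacobiTheta₂ (z + 1 / 2 - τ / 2) τ
  set c := (-Complex.I * τ) ^ (1 / 2 : ℂ)
  have h3 : X = c * (cexp (π * Complex.I * (z + 1 / 2 - τ / 2 + τ) ^ 2 / τ) *
      cexp (-π * Complex.I * (τ + 2 * (z + 1 / 2 - τ / 2))) * Y) := by
    rw [mul_assoc (cexp _), h1]
    have : cexp (π * Complex.I * (z + 1 / 2 - τ / 2 + τ) ^ 2 / τ) *
      cexp (-π * Complex.I * (z + 1 / 2 - τ / 2 + τ) ^ 2 / τ) = 1 := by
      rw [← Complex.exp_add, ← Complex.exp_zero]; congr 1; ring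
    have h4 : c * (1 / c) = 1 := by field_simp
    linear_combination (-X) * h4 - c * (1/c) * X * this
  have h5 : -Complex.I = cexp (-π * Complex.I / 2) := by
    have := Complex.exp_neg_pi_div_two_mul_I
    rw [← this]; congr 1; ring
  rw [h3, h5]
  have : cexp (-π * Complex.I * (z / τ) + π * Complex.I * (-1 / τ) / 4) *
     (cexp (π * Complex.I * (z + 1 / 2 - τ / 2 + τ) ^ 2 / τ) *
      cexp (-π * Complex.I * (τ + 2 * (z + 1 / 2 - τ / 2)))) =
      cexp (-π * Complex.I / 2) * (cexp (π * Complex.I * z ^ 2 / τ) * cexp (-π * Complex.I * z + π * Complex.I * τ / 4)) := by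
    rw [← Complex.exp_add, ← Complex.exp_add, ← Complex.exp_add, ← Complex.exp_add]
    congr 1
    field_simp
    ring
  linear_combination c * Y * this

lemma jt_mul {τ : ℂ} (hτ : 0 < τ.im) (x y : ℂ) :
    jacobiTheta₂ (x + y) τ * jacobiTheta₂ (x - y) τ =
      jacobiTheta₂ (2 * x) (2 * τ) * jacobiTheta₂ (2 * y) (2 * τ) +
      (cexp (2 * π * Complex.I * x + π * Complex.I * τ / 2) * jacobiTheta₂ (2 * x + τ) (2 * τ)) *
      (cexp (2 * π * Complex.I * y + π * Complex.I * τ / 2) * jacobiTheta₂ (2 * y + τ) (2 * τ)) := by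
  have hτ2 : 0 < (2 * τ).im := by simpa using hτ
  have hs : ∀ z, ∀ t : ℂ, 0 < t.im → Summable fun n => ‖jacobiTheta₂_term n z t‖ := fun z t ht =>
    ((summable_jacobiTheta₂_term_iff z t).mpr ht).norm
  have prodsum : ∀ (z w t : ℂ), 0 < t.im →
      HasSum (fun p : ℤ × ℤ => jacobiTheta₂_term p.1 z t * jacobiTheta₂_term p.2 w t)
        (jacobiTheta₂ z t * jacobiTheta₂ w t) := by
    intro z w t ht
    have h1 := (hs z t ht)
    have h2 := (hs w t ht)
    have := (summable_mul_of_summable_norm h1 h2).hasSum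
    rwa [← tsum_mul_tsum_of_summable_norm h1 h2] at this
  let ev : ℤ × ℤ → ℤ × ℤ := fun p => (p.1 + p.2, p.1 - p.2)
  let od : ℤ × ℤ → ℤ × ℤ := fun p => (p.1 + p.2 + 1, p.1 - p.2)
  have hev : Function.Injective ev := by
    rintro ⟨a, b⟩ ⟨c, d⟩ h
    simp only [ev, Prod.mk.injEq] at h ⊢
    omega
  have hod : Function.Injective od := by
    rintro ⟨a, b⟩ ⟨c, d⟩ h
    simp only [od, Prod.mk.injEq] at h ⊢
    omega
  have hc : IsCompl (Set.range ev) (Set.range od) := by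
    rw [isCompl_iff, Set.disjoint_iff, codisjoint_iff_le_sup]
    constructor
    · rintro ⟨n, m⟩ ⟨⟨⟨a, b⟩, h1⟩, ⟨⟨c, d⟩, h2⟩⟩
      simp only [ev, od, Prod.mk.injEq] at h1 h2
      simp; omega
    · rintro ⟨n, m⟩ -
      rcases Int.even_or_odd' (n + m) with ⟨k, hk | hk⟩
      · left; exact ⟨(k, n - k), by simp only [ev, Prod.mk.injEq]; omega⟩
      · right; exact ⟨(k, n - k - 1), by simp only [od, Prod.mk.injEq]; omega⟩
  have h1 := prodsum (2 * x) (2 * y) (2 * τ) hτ2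
  have h2 := (prodsum (2 * x + τ) (2 * y + τ) (2 * τ) hτ2).mul_left
    (cexp (2 * π * Complex.I * x + π * Complex.I * τ / 2) * cexp (2 * π * Complex.I * y + π * Complex.I * τ / 2))
  let f : ℤ × ℤ → ℂ := fun p => jacobiTheta₂_term p.1 (x + y) τ * jacobiTheta₂_term p.2 (x - y) τ
  have e1 : f ∘ ev = (fun p : ℤ × ℤ => jacobiTheta₂_term p.1 (2 * x) (2 * τ) *
      jacobiTheta₂_term p.2 (2 * y) (2 * τ)) := by
    funext ⟨a, b⟩
    simp only [f, ev, Function.comp, jacobiTheta₂_term, ← Complex.exp_add]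
    congr 1; push_cast; ring
  have e2 : f ∘ od = (fun p : ℤ × ℤ =>
      (cexp (2 * π * Complex.I * x + π * Complex.I * τ / 2) * cexp (2 * π * Complex.I * y + π * Complex.I * τ / 2)) *
      (jacobiTheta₂_term p.1 (2 * x + τ) (2 * τ) *
      jacobiTheta₂_term p.2 (2 * y + τ) (2 * τ))) := by
    funext ⟨a, b⟩
    simp only [f, od, Function.comp, jacobiTheta₂_term, ← Complex.exp_add]
    congr 1; push_cast; ring
  rw [← e1, ← hev.hasSum_range_iff] at h1
  rw [← e2, ← hod.hasSum_range_iff] at h2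
  have h3 := HasSum.add_isCompl (f := f) hc h1 h2
  have h4 := prodsum (x + y) (x - y) τ hτ
  refine (h4.unique h3).trans ?_
  rw [mul_mul_mul_comm]

lemma th_mul {τ : ℂ} (hτ : 0 < τ.im) : ∃ A B : ℂ → ℂ, ∀ x y,
    th (x + y) τ * th (x - y) τ = A x * B y - B x * A y := by
  refine ⟨fun x => cexp (2 * π * Complex.I * x + π * Complex.I * τ / 2) * jacobiTheta₂ (2 * x + τ) (2 * τ),
    fun x => jacobiTheta₂ (2 * x) (2 * τ), fun x y => ?_⟩
  have h := jt_mul hτ (x + 1 / 2 - τ / 2) y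
  have a1 : x + 1 / 2 - τ / 2 + y = x + y + 1 / 2 - τ / 2 := by ring
  have a2 : x + 1 / 2 - τ / 2 - y = x - y + 1 / 2 - τ / 2 := by ring
  have a3 : 2 * (x + 1 / 2 - τ / 2) + τ = 2 * x + 1 := by ring
  have a4 : 2 * (x + 1 / 2 - τ / 2) = (2 * x - τ) + 1 := by ring
  rw [a3, a4, jacobiTheta₂_add_left, jacobiTheta₂_add_left, a1, a2] at h
  have h5 := jacobiTheta₂_add_left' (2 * x - τ) (2 * τ)
  have a5 : 2 * x - τ + 2 * τ = 2 * x + τ := by ring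
  rw [a5] at h5
  simp only [th]
  rw [mul_mul_mul_comm, h, h5, ← Complex.exp_add]
  have b1 : cexp (-π * Complex.I * (x + y) + π * Complex.I * τ / 4 + (-π * Complex.I * (x - y) + π * Complex.I * τ / 4)) =
    cexp (2 * π * Complex.I * x + π * Complex.I * τ / 2) * cexp (-π * Complex.I * (2 * τ + 2 * (2 * x - τ))) := by
    rw [← Complex.exp_add]; congr 1; ring
  have b2 : cexp (-π * Complex.I * (x + y) + π * Complex.I * τ / 4 + (-π * Complex.I * (x - y) + π * Complex.I * τ / 4)) *
     cexp (2 * π * Complex.I * (x + 1 / 2 - τ / 2) + π * Complex.I * τ / 2) = -1 := by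
    rw [← Complex.exp_add, s13_exp_eq_neg (b := 0) (by ring), Complex.exp_zero]
  linear_combination jacobiTheta₂ (2 * x - τ) (2 * τ) * jacobiTheta₂ (2 * y) (2 * τ) * b1 +
    jacobiTheta₂ (2 * x) (2 * τ) * (cexp (2 * π * Complex.I * y + π * Complex.I * τ / 2) * jacobiTheta₂ (2 * y + τ) (2 * τ)) * b2

lemma s13_contour {h : ℂ → ℂ} (hd : Differentiable ℂ h) (hp : ∀ z, h (z + 1) = h z) (τ : ℂ) :
    ∫ x in (0 : ℝ)..1, h (x + τ) = ∫ x in (0 : ℝ)..1, h x := by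
  have key := Complex.integral_boundary_rect_eq_zero_of_differentiableOn h (0 : ℂ)
    (1 + τ.im * Complex.I) hd.differentiableOn
  have hv : ∀ y : ℝ, h (((1 + τ.im * Complex.I : ℂ).re : ℂ) + y * Complex.I) = h (((0 : ℂ).re : ℂ) + y * Complex.I) := by
    intro y
    rw [← hp (((0 : ℂ).re : ℂ) + y * Complex.I)]
    congr 1
    simp
    ring
  simp only [hv] at key
  simp at key
  have hper : Function.Periodic (fun x : ℝ => h (x + τ.im * Complex.I)) 1 := by
    intro x
    simp only
    rw [← hp (x + τ.im * Complex.I)]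
    congr 1
    push_cast; ring
  have h2 := hper.intervalIntegral_add_eq 0 τ.re
  have h3 : ∫ x in (0 : ℝ)..1, h (x + τ) = ∫ x in (τ.re)..(τ.re + 1), h (x + τ.im * Complex.I) := by
    have := intervalIntegral.integral_comp_add_right (a := 0) (b := 1)
      (fun x : ℝ => h (x + τ.im * Complex.I)) τ.re
    rw [zero_add, add_comm 1] at this
    rw [← this]
    congr 1
    funext x
    congr 1
    push_cast
    rw [add_assoc, Complex.re_add_im]
  rw [h3, ← h2, zero_add]
  exact (sub_eq_zero.mp key).symm

lemma s13_jt_uniq {τ : ℂ} (hτ : 0 < τ.im) {g : ℂ → ℂ} (hd : Differentiable ℂ g)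
    (h1 : ∀ z, g (z + 1) = g z) (h2 : ∀ z, g (z + τ) = -(cexp (-2 * π * Complex.I * z) * g z)) :
    ∃ C, ∀ z, g z = C * jacobiTheta₂ (z + 1 / 2 - τ / 2) τ := by
  let a : ℤ → ℂ := fun n => ∫ x in (0 : ℝ)..1, cexp (-2 * π * Complex.I * n * x) * g x
  let t : ℤ → ℂ := fun n => cexp (π * Complex.I * n + π * Complex.I * (n ^ 2 - n) * τ)
  have ht0 : ∀ n, t n ≠ 0 := fun n => Complex.exp_ne_zero _
  have htr : ∀ n : ℤ, t (n + 1) = -cexp (2 * π * Complex.I * n * τ) * t n := by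
    intro n
    simp only [t]
    rw [neg_mul, ← Complex.exp_add]
    apply s13_exp_eq_neg
    push_cast; ring
  have har : ∀ n : ℤ, a (n + 1) = -cexp (2 * π * Complex.I * n * τ) * a n := by
    intro n
    have := s13_contour (h := fun z => cexp (-2 * π * Complex.I * n * z) * g z) (by fun_prop) (by
      intro z
      rw [h1]
      congr 1
      apply s13_exp_eq (-n)
      push_cast; ring) τ
    simp only [h2] at this
    simp only [a]
    rw [← this, ← intervalIntegral.integral_const_mul]
    congr 1
    funext x
    have e : cexp (-2 * π * Complex.I * (n + 1 : ℤ) * x) = cexp (2 * π * Complex.I * n * τ) *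
       (cexp (-2 * π * Complex.I * n * (x + τ)) * cexp (-2 * π * Complex.I * x)) := by
      rw [← Complex.exp_add, ← Complex.exp_add]
      congr 1
      push_cast; ring
    rw [e]; ring
  have hat : ∀ n : ℤ, a n = a 0 * t n := by
    intro n
    induction n using Int.induction_on with
    | zero => simp [t]
    | succ n ih => rw [har, htr, ih]; ring
    | pred n ih =>
      have e1 := har (-n - 1)
      have e2 := htr (-n - 1)
      rw [sub_add_cancel] at e1 e2
      rw [e1, e2] at ih
      have e3 : -cexp (2 * π * Complex.I * ((-n - 1 : ℤ) : ℂ) * τ) ≠ 0 :=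
        neg_ne_zero.mpr (Complex.exp_ne_zero _)
      apply mul_left_cancel₀ e3
      rw [ih]; ring
  have hterm : ∀ (n : ℤ) (z : ℂ), jacobiTheta₂_term n (z + 1 / 2 - τ / 2) τ =
      t n * cexp (2 * π * Complex.I * n * z) := by
    intro n z
    simp only [jacobiTheta₂_term, t]
    rw [← Complex.exp_add]
    congr 1; ring
  refine ⟨a 0, ?_⟩
  -- equality on the real line
  have hreal : ∀ x : ℝ, g x = a 0 * jacobiTheta₂ (x + 1 / 2 - τ / 2) τ := by
    have hper : Function.Periodic (fun x : ℝ => g x) 1 := by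
      intro x; simp only; rw [← h1 x]; congr 1; push_cast; ring
    have hcont : Continuous (fun x : ℝ => g x) := hd.continuous.comp Complex.continuous_ofReal
    let f : C(AddCircle (1 : ℝ), ℂ) := ⟨hper.lift, by
      exact continuous_coinduced_dom.mpr hcont⟩
    have hf : ∀ x : ℝ, f (x : AddCircle (1 : ℝ)) = g x := fun x => rfl
    have hc : ∀ n, fourierCoeff f n = a n := by
      intro n
      rw [fourierCoeff_eq_intervalIntegral _ n 0]
      simp only [a, zero_add, div_one, one_smul]
      congr 1
      funext x
      rw [hf, fourier_coe_apply, smul_eq_mul]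
      congr 2
      push_cast; ring
    have hsum : ∀ x : ℝ, HasSum (fun n : ℤ => a n * cexp (2 * π * Complex.I * n * x))
        (a 0 * jacobiTheta₂ (x + 1 / 2 - τ / 2) τ) := by
      intro x
      have := (hasSum_jacobiTheta₂_term (x + 1 / 2 - τ / 2) hτ).mul_left (a 0)
      refine this.congr_fun ?_
      intro n
      rw [hterm, hat]; ring
    have hs : Summable (fourierCoeff f) := by
      have := (hsum 0).summable
      refine this.congr ?_
      intro n; rw [hc]; simp
    intro x
    have h3 := has_pointwise_sum_fourier_series_of_summable hs (x : AddCircle (1 : ℝ))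
    rw [hf] at h3
    refine h3.unique ?_
    refine (hsum x).congr_fun ?_
    intro n
    rw [hc, fourier_coe_apply, smul_eq_mul]
    congr 2
    push_cast; ring
  have hJ : Differentiable ℂ (fun z => a 0 * jacobiTheta₂ (z + 1 / 2 - τ / 2) τ) := by
    intro z
    refine DifferentiableAt.const_mul ?_ _
    exact (differentiableAt_jacobiTheta₂_fst (z + 1 / 2 - τ / 2) hτ).comp z
      (f := fun z => z + 1 / 2 - τ / 2) (by fun_prop)
  have hA1 : AnalyticOnNhd ℂ g Set.univ := fun z _ => hd.analyticAt z
  have hA2 : AnalyticOnNhd ℂ (fun z => a 0 * jacobiTheta₂ (z + 1 / 2 - τ / 2) τ) Set.univ :=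
    fun z _ => hJ.analyticAt z
  have hfr : ∃ᶠ z in nhdsWithin (0 : ℂ) {0}ᶜ, g z = a 0 * jacobiTheta₂ (z + 1 / 2 - τ / 2) τ := by
    have ht : Filter.Tendsto (fun x : ℝ => (x : ℂ)) (nhdsWithin 0 {0}ᶜ) (nhdsWithin 0 {0}ᶜ) := by
      apply tendsto_nhdsWithin_of_tendsto_nhds_of_eventually_within
      · have := Complex.continuous_ofReal.tendsto (0 : ℝ)
        simp only [Complex.ofReal_zero] at this
        exact this.mono_left nhdsWithin_le_nhds
      · filter_upwards [self_mem_nhdsWithin] with x hx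
        simpa using hx
    exact ht.frequently (Filter.Eventually.frequently (Filter.Eventually.of_forall hreal))
  have := AnalyticOnNhd.eq_of_frequently_eq hA1 hA2 hfr
  exact fun z => congrFun this z

/-- One half of the theta product. -/
def Ep (z τ : ℂ) : ℂ := ∏' n : ℕ, (1 + -cexp (2 * π * Complex.I * ((n + 1) * τ + z)))

/-- The theta product. -/
def Gp (z τ : ℂ) : ℂ := (1 - cexp (2 * π * Complex.I * z)) * Ep z τ * Ep (-z) τ

lemma norm_q_lt {τ : ℂ} (hτ : 0 < τ.im) : ‖cexp (2 * π * Complex.I * τ)‖ < 1 := by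
  rw [Complex.norm_exp, Real.exp_lt_one_iff]
  simp
  positivity

lemma Ep_term (z τ : ℂ) (n : ℕ) : cexp (2 * π * Complex.I * ((n + 1) * τ + z)) =
    cexp (2 * π * Complex.I * τ) ^ (n + 1) * cexp (2 * π * Complex.I * z) := by
  rw [← Complex.exp_nat_mul, ← Complex.exp_add]
  congr 1; push_cast; ring

lemma Ep_summable {τ : ℂ} (hτ : 0 < τ.im) (R : ℝ) :
    Summable (fun n : ℕ => ‖cexp (2 * π * Complex.I * τ)‖ ^ (n + 1) * R) := by
  apply Summable.mul_right
  exact (summable_nat_add_iff 1).mpr (summable_geometric_of_lt_one (norm_nonneg _) (norm_q_lt hτ))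

lemma Ep_summable' {τ : ℂ} (hτ : 0 < τ.im) (z : ℂ) :
    Summable (fun n : ℕ => ‖-cexp (2 * π * Complex.I * ((n + 1) * τ + z))‖) := by
  refine (Ep_summable hτ ‖cexp (2 * π * Complex.I * z)‖).congr ?_
  intro n
  rw [norm_neg, Ep_term, norm_mul, norm_pow]

lemma Ep_multipliable {τ : ℂ} (hτ : 0 < τ.im) (z : ℂ) :
    Multipliable (fun n : ℕ => (1 + -cexp (2 * π * Complex.I * ((n + 1) * τ + z)))) :=
  multipliable_one_add_of_summable (Ep_summable' hτ z)

lemma Ep_differentiable {τ : ℂ} (hτ : 0 < τ.im) : Differentiable ℂ (fun z => Ep z τ) := by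
  intro z
  let R := ‖cexp (2 * π * Complex.I * z)‖ + 1
  let K : Set ℂ := {w | ‖cexp (2 * π * Complex.I * w)‖ < R}
  have hK : IsOpen K := isOpen_lt (by fun_prop) continuous_const
  have hz : z ∈ K := by simp [K, R]
  have h := Summable.hasProdLocallyUniformlyOn_nat_one_add
    (f := fun (n : ℕ) (w : ℂ) => -cexp (2 * π * Complex.I * ((n + 1) * τ + w))) hK (Ep_summable hτ R)
    (Filter.Eventually.of_forall (by
      intro n w hw
      rw [norm_neg, Ep_term, norm_mul, norm_pow]
      have : ‖cexp (2 * π * Complex.I * w)‖ ≤ R := le_of_lt hw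
      gcongr)) (fun n => by fun_prop)
  have hd := h.differentiableOn
    (Filter.Eventually.of_forall (by
      intro s
      simp only []
      have : Differentiable ℂ (fun w : ℂ => ∏ n ∈ s,
          (1 + -cexp (2 * π * Complex.I * (((n : ℕ) + 1) * τ + w)))) := by fun_prop
      exact this.differentiableOn)) hK
  exact hd.differentiableAt (hK.mem_nhds hz)

lemma Ep_add_one (z τ : ℂ) : Ep (z + 1) τ = Ep z τ := by
  unfold Ep
  congr 1; funext n
  congr 2
  apply s13_exp_eq 1; push_cast; ring

lemma Ep_sub_one (z τ : ℂ) : Ep (z - 1) τ = Ep z τ := by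
  rw [← Ep_add_one (z - 1), sub_add_cancel]

lemma Ep_add_tau {τ : ℂ} (hτ : 0 < τ.im) (z : ℂ) :
    Ep z τ = (1 - cexp (2 * π * Complex.I * (z + τ))) * Ep (z + τ) τ := by
  have e : ∀ n : ℕ, (1 + -cexp (2 * π * Complex.I * ((n + 1) * τ + (z + τ)))) =
      (1 + -cexp (2 * π * Complex.I * (((n + 1 : ℕ) + 1) * τ + z))) := by
    intro n
    have : ((n : ℂ) + 1) * τ + (z + τ) = ((n + 1 : ℕ) + 1) * τ + z := by push_cast; ring
    rw [this]
  have hm := Multipliable.congr (Ep_multipliable hτ (z + τ)) e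
  have h := tprod_eq_zero_mul'
    (f := fun n : ℕ => (1 + -cexp (2 * π * Complex.I * ((n + 1) * τ + z)))) hm
  have h0 : (1 + -cexp (2 * π * Complex.I * (((0 : ℕ) + 1) * τ + z))) =
      1 - cexp (2 * π * Complex.I * (z + τ)) := by
    have : ((0 : ℕ) + 1) * τ + z = z + τ := by push_cast; ring
    rw [this, ← sub_eq_add_neg]
  rw [h0] at h
  rw [Ep, h, Ep, tprod_congr e]

lemma Gp_triple {τ : ℂ} (hτ : 0 < τ.im) :
    ∃ C, ∀ z, Gp z τ = C * (cexp (π * Complex.I * z) * th z τ) := by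
  have hE := Ep_differentiable hτ
  have hE' : Differentiable ℂ (fun z => Ep (-z) τ) := hE.comp differentiable_neg
  obtain ⟨C, hC⟩ := s13_jt_uniq hτ (g := fun z => Gp z τ) (by unfold Gp; fun_prop) (by
      intro z
      unfold Gp
      have : cexp (2 * π * Complex.I * (z + 1)) = cexp (2 * π * Complex.I * z) := by
        apply s13_exp_eq 1; push_cast; ring
      rw [this, Ep_add_one, neg_add, ← sub_eq_add_neg, Ep_sub_one]) (by
      intro z
      unfold Gp
      rw [Ep_add_tau hτ z, Ep_add_tau hτ (-(z + τ))]
      have e1 : -(z + τ) + τ = -z := by ring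
      rw [e1]
      have e2 : cexp (2 * π * Complex.I * -z) * cexp (2 * π * Complex.I * z) = 1 := by
        rw [← Complex.exp_add, ← Complex.exp_zero]; congr 1; ring
      have e3 : -2 * π * Complex.I * z = 2 * π * Complex.I * -z := by ring
      rw [e3]
      linear_combination (-(1 - cexp (2 * π * Complex.I * (z + τ))) * Ep (z + τ) τ * Ep (-z) τ) * e2)
  refine ⟨C * cexp (-(π * Complex.I * τ / 4)), fun z => ?_⟩
  rw [hC, th]
  have : cexp (-(π * Complex.I * τ / 4)) * (cexp (π * Complex.I * z) *
    cexp (-π * Complex.I * z + π * Complex.I * τ / 4)) = 1 := by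
    rw [← Complex.exp_add, ← Complex.exp_add, ← Complex.exp_zero]; congr 1; ring
  linear_combination (-C * jacobiTheta₂ (z + 1 / 2 - τ / 2) τ) * this

lemma Ep_ne_zero {τ : ℂ} (hτ : 0 < τ.im) {z : ℂ} (hz : -τ.im < z.im) : Ep z τ ≠ 0 := by
  apply tprod_one_add_ne_zero_of_summable _ (Ep_summable' hτ z)
  intro n h
  have h1 : cexp (2 * π * Complex.I * ((n + 1) * τ + z)) = 1 := by linear_combination -h
  have h2 : ‖cexp (2 * π * Complex.I * ((n + 1) * τ + z))‖ = 1 := by rw [h1, norm_one]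
  rw [Complex.norm_exp, Real.exp_eq_one_iff] at h2
  have : 0 < ((n : ℝ) + 1) * τ.im + z.im := by
    have : (0 : ℝ) ≤ n * τ.im := by positivity
    nlinarith
  have h4 : (2 * π * Complex.I * ((n + 1) * τ + z)).re = -(2 * π * (((n : ℝ) + 1) * τ.im + z.im)) := by
    simp
  rw [h4] at h2
  have := mul_pos (mul_pos two_pos Real.pi_pos) this
  linarith

lemma th_ne_zero {τ : ℂ} (hτ : 0 < τ.im) {z : ℂ} (h1 : -τ.im < z.im) (h2 : z.im < τ.im)
    (h3 : cexp (2 * π * Complex.I * z) ≠ 1) : th z τ ≠ 0 := by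
  obtain ⟨C, hC⟩ := Gp_triple hτ
  intro h
  have := hC z
  rw [h] at this
  simp only [mul_zero, Gp, mul_eq_zero] at this
  rcases this with (h | h) | h
  · exact h3 (sub_eq_zero.mp h).symm
  · exact Ep_ne_zero hτ h1 h
  · exact Ep_ne_zero hτ (by simpa using h2) h

lemma th_ne_zero' {τ : ℂ} (hτ : 0 < τ.im) {z : ℂ} (h1 : 0 < z.im) (h2 : z.im < τ.im) :
    th z τ ≠ 0 := by
  refine th_ne_zero hτ (by linarith) h2 ?_
  intro h
  have := norm_q_lt h1
  rw [h] at this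
  simp at this

/-- Theta function with characteristics. -/
def Kf (r s τ : ℂ) : ℂ := cexp (π * Complex.I * r * (r * τ + s)) * th (r * τ + s) τ

lemma siegel_eq (τ : ℍ) : ∃ C : ℂ, C ≠ 0 ∧ ∀ r : ℚ, siegel (r, 0) τ = C * Kf r 0 τ := by
  have hτ : 0 < (τ : ℂ).im := τ.2
  obtain ⟨C, hC⟩ := Gp_triple hτ
  have hC0 : C ≠ 0 := by
    rintro rfl
    have := hC (1 / 2)
    simp only [zero_mul, Gp, mul_eq_zero] at this
    rcases this with (h | h) | h
    · have e : cexp (2 * π * Complex.I * (1 / 2)) = -1 := by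
        rw [← Complex.exp_pi_mul_I]; congr 1; ring
      rw [e] at h
      norm_num at h
    · exact Ep_ne_zero hτ (by norm_num; exact τ.2) h
    · exact Ep_ne_zero hτ (by norm_num; exact τ.2) h
  refine ⟨-C * cexp (π * Complex.I * τ / 6), by simp [hC0], fun r => ?_⟩
  have h := hC (r * τ)
  have hS : siegel (r, 0) τ = -cexp (π * Complex.I * (((r : ℂ) ^ 2 - r + 1 / 6) * τ)) *
      Gp (r * τ) τ := by
    unfold siegel Gp
    simp only [Rat.cast_zero, mul_zero, zero_mul, Complex.exp_zero, mul_one, add_zero, sub_zero]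
    rw [mul_assoc, mul_assoc (1 - _)]
    congr 2
    rw [Ep, Ep, ← Multipliable.tprod_mul (Ep_multipliable hτ _) (Ep_multipliable hτ _)]
    congr 1
    funext n
    simp only [← sub_eq_add_neg]
    congr 4 <;> ring
  rw [hS, h, Kf]
  have : cexp (π * Complex.I * (((r : ℂ) ^ 2 - r + 1 / 6) * τ)) * cexp (π * Complex.I * (r * τ)) =
    cexp (π * Complex.I * τ / 6) * cexp (π * Complex.I * r * (r * τ + 0)) := by
    rw [← Complex.exp_add, ← Complex.exp_add]
    congr 1; ring
  rw [add_zero] at this ⊢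
  linear_combination (-C * th (r * τ) τ) * this

lemma Kf_neg (r s τ : ℂ) : Kf (-r) (-s) τ = -Kf r s τ := by
  unfold Kf
  have : -r * τ + -s = -(r * τ + s) := by ring
  rw [this, th_neg]
  have : π * Complex.I * -r * -(r * τ + s) = π * Complex.I * r * (r * τ + s) := by ring
  rw [this]; ring

lemma Kf_add_left (r s τ : ℂ) : Kf (r + 1) s τ = -cexp (-(π * Complex.I * s)) * Kf r s τ := by
  unfold Kf
  have : (r + 1) * τ + s = (r * τ + s) + τ := by ring
  rw [this, th_add_tau]
  have : cexp (π * Complex.I * (r + 1) * (r * τ + s + τ)) * cexp (-π * Complex.I * τ - 2 * π * Complex.I * (r * τ + s)) =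
      cexp (-(π * Complex.I * s)) * cexp (π * Complex.I * r * (r * τ + s)) := by
    rw [← Complex.exp_add, ← Complex.exp_add]; congr 1; ring
  linear_combination -th (r * τ + s) τ * this

lemma Kf_add_right (r s τ : ℂ) : Kf r (s + 1) τ = -cexp (π * Complex.I * r) * Kf r s τ := by
  unfold Kf
  rw [← add_assoc, th_add_one]
  have : cexp (π * Complex.I * r * (r * τ + s + 1)) =
      cexp (π * Complex.I * r) * cexp (π * Complex.I * r * (r * τ + s)) := by
    rw [← Complex.exp_add]; congr 1; ring
  linear_combination -th (r * τ + s) τ * this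

lemma Kf_T (r s τ : ℂ) : Kf r s (τ + 1) = cexp (π * Complex.I / 4) * Kf r (r + s) τ := by
  unfold Kf
  have : r * (τ + 1) + s = r * τ + (r + s) := by ring
  rw [th_T, this]; ring

lemma Kf_S {τ : ℂ} (hτ : 0 < τ.im) : ∃ κ : ℂ, κ ≠ 0 ∧
    ∀ r s, Kf r s (-1 / τ) = κ * Kf s (-r) τ := by
  have h0 : τ ≠ 0 := by rintro rfl; simp at hτ
  obtain ⟨κ, hκ, h⟩ := th_S hτ
  refine ⟨κ, hκ, fun r s => ?_⟩
  unfold Kf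
  have e : r * (-1 / τ) + s = (s * τ + -r) / τ := by field_simp; ring
  rw [e, h]
  have : cexp (π * Complex.I * r * ((s * τ + -r) / τ)) * cexp (π * Complex.I * (s * τ + -r) ^ 2 / τ) =
      cexp (π * Complex.I * s * (s * τ + -r)) := by
    rw [← Complex.exp_add]; congr 1; field_simp; ring
  linear_combination (κ * th (s * τ + -r) τ) * this

/-- The family of conjugates of the modular function. -/
def FF (a b : ℤ) (τ : ℂ) : ℂ := (Kf (a / 2) (b / 2) τ / Kf (a / 6) (b / 6) τ) ^ 3

lemma FF_neg (a b : ℤ) (τ : ℂ) : FF (-a) (-b) τ = FF a b τ := by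
  unfold FF
  push_cast
  simp only [neg_div]
  rw [Kf_neg, Kf_neg, neg_div_neg_eq]

lemma FF_left (a b : ℤ) (τ : ℂ) : FF (a + 6) b τ = FF a b τ := by
  unfold FF
  push_cast
  have e1 : ((a : ℂ) + 6) / 2 = a / 2 + 1 + 1 + 1 := by ring
  have e2 : ((a : ℂ) + 6) / 6 = a / 6 + 1 := by ring
  rw [e1, e2, Kf_add_left, Kf_add_left, Kf_add_left, Kf_add_left]
  have h : (cexp (-(π * Complex.I * (b / 2))) ^ 3) ^ 3 = cexp (-(π * Complex.I * (b / 6))) ^ 3 := by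
    simp only [← Complex.exp_nat_mul]
    apply s13_exp_eq (-2 * b); push_cast; ring
  rw [div_pow, div_pow]
  have e3 : (-cexp (-(π * Complex.I * (b / 2))) * (-cexp (-(π * Complex.I * (b / 2))) *
      (-cexp (-(π * Complex.I * (b / 2))) * Kf (a / 2) (b / 2) τ))) ^ 3 =
      (-(cexp (-(π * Complex.I * (b / 2))) ^ 3) ^ 3) * Kf (a / 2) (b / 2) τ ^ 3 := by ring
  rw [e3, h, mul_pow]
  rw [show (-cexp (-(π * Complex.I * (b / 6)))) ^ 3 = -cexp (-(π * Complex.I * (b / 6))) ^ 3 by ring]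
  exact mul_div_mul_left _ _ (by simp)

lemma FF_right (a b : ℤ) (τ : ℂ) : FF a (b + 6) τ = FF a b τ := by
  unfold FF
  push_cast
  have e1 : ((b : ℂ) + 6) / 2 = b / 2 + 1 + 1 + 1 := by ring
  have e2 : ((b : ℂ) + 6) / 6 = b / 6 + 1 := by ring
  rw [e1, e2, Kf_add_right, Kf_add_right, Kf_add_right, Kf_add_right]
  have h : (cexp (π * Complex.I * (a / 2)) ^ 3) ^ 3 = cexp (π * Complex.I * (a / 6)) ^ 3 := by
    simp only [← Complex.exp_nat_mul]
    apply s13_exp_eq (2 * a); push_cast; ring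
  rw [div_pow, div_pow]
  have e3 : (-cexp (π * Complex.I * (a / 2)) * (-cexp (π * Complex.I * (a / 2)) *
      (-cexp (π * Complex.I * (a / 2)) * Kf (a / 2) (b / 2) τ))) ^ 3 =
      (-(cexp (π * Complex.I * (a / 2)) ^ 3) ^ 3) * Kf (a / 2) (b / 2) τ ^ 3 := by ring
  rw [e3, h, mul_pow]
  rw [show (-cexp (π * Complex.I * (a / 6))) ^ 3 = -cexp (π * Complex.I * (a / 6)) ^ 3 by ring]
  exact mul_div_mul_left _ _ (by simp)

lemma FF_T (a b : ℤ) (τ : ℂ) : FF a b (τ + 1) = FF a (a + b) τ := by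
  unfold FF
  push_cast
  rw [Kf_T, Kf_T, mul_div_mul_left _ _ (Complex.exp_ne_zero _), add_div, add_div]

lemma FF_S (a b : ℤ) {τ : ℂ} (hτ : 0 < τ.im) : FF a b (-1 / τ) = FF b (-a) τ := by
  unfold FF
  obtain ⟨κ, hκ, h⟩ := Kf_S hτ
  push_cast
  rw [h, h, mul_div_mul_left _ _ hκ, neg_div, neg_div]

lemma FF_left_mul (a b k : ℤ) (τ : ℂ) : FF (a + 6 * k) b τ = FF a b τ := by
  induction k using Int.induction_on with
  | zero => simp
  | succ n ih => rw [← ih, ← FF_left (a + 6 * n)]; congr 1; ring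
  | pred n ih => rw [← ih, ← FF_left]; congr 1; ring

lemma FF_right_mul (a b k : ℤ) (τ : ℂ) : FF a (b + 6 * k) τ = FF a b τ := by
  induction k using Int.induction_on with
  | zero => simp
  | succ n ih => rw [← ih, ← FF_right a (b + 6 * n)]; congr 1; ring
  | pred n ih => rw [← ih, ← FF_right]; congr 1; ring

lemma FF_mod (a b : ℤ) (τ : ℂ) : FF a b τ = FF (a % 6) (b % 6) τ := by
  rw [← FF_left_mul (a % 6) (b % 6) (a / 6), ← FF_right_mul _ (b % 6) (b / 6),
    Int.emod_add_mul_ediv, Int.emod_add_mul_ediv]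

lemma FF_SL (γ : SL(2, ℤ)) : ∀ (a b : ℤ) (τ : ℍ), FF a b ((γ • τ : ℍ) : ℂ) =
    FF (a * γ 0 0 + b * γ 1 0) (a * γ 0 1 + b * γ 1 1) τ := by
  have hγ : γ ∈ Subgroup.closure {ModularGroup.S, ModularGroup.T} := by
    rw [SpecialLinearGroup.SL2Z_generators]; trivial
  induction hγ using Subgroup.closure_induction with
  | mem x hx =>
    intro a b τ
    rcases hx with rfl | rfl
    · rw [UpperHalfPlane.modular_S_smul]
      have : (((-(τ : ℂ))⁻¹ : ℂ)) = -1 / (τ : ℂ) := by rw [inv_neg]; ring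
      simp only []
      rw [this, FF_S a b τ.2]
      simp [ModularGroup.S]
    · rw [UpperHalfPlane.modular_T_smul, UpperHalfPlane.coe_vadd]
      push_cast
      rw [add_comm, FF_T]
      simp [ModularGroup.T]
  | one => intro a b τ; simp
  | mul x y _ _ hx hy =>
    intro a b τ
    rw [mul_smul, hx, hy]
    simp only [Matrix.SpecialLinearGroup.coe_mul, Matrix.mul_apply, Fin.sum_univ_two]
    congr 1 <;> ring
  | inv x _ hx =>
    intro a b τ
    have h := hx (a * x⁻¹ 0 0 + b * x⁻¹ 1 0) (a * x⁻¹ 0 1 + b * x⁻¹ 1 1) (x⁻¹ • τ)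
    rw [smul_inv_smul] at h
    rw [h]
    have hd := x.det_coe
    rw [Matrix.det_fin_two] at hd
    simp only [Matrix.SpecialLinearGroup.coe_inv, Matrix.adjugate_fin_two, Matrix.of_apply,
      Matrix.cons_val', Matrix.cons_val_zero, Matrix.cons_val_one, Matrix.cons_val_fin_one]
    congr 1
    · linear_combination (-a) * hd
    · linear_combination (-b) * hd

lemma gUp6_eq (τ : ℍ) : gUp6 τ = FF 1 0 τ := by
  obtain ⟨C, hC, h⟩ := siegel_eq τ
  unfold gUp6 FF
  rw [h, h, ← div_pow, mul_div_mul_left _ _ hC]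
  push_cast
  simp

/-- Normalised theta values at the multiples of `τ / 6`. -/
def kk (τ : ℂ) (j : ℤ) : ℂ := cexp (π * Complex.I * τ / 36 * j ^ 2) * th (j * τ / 6) τ

/-- Normalised theta values at the multiples of `τ / 6`, shifted by `1 / 2`. -/
def hh (τ : ℂ) (j : ℤ) : ℂ := cexp (π * Complex.I * τ / 36 * j ^ 2) * th (j * τ / 6 + 1 / 2) τ

lemma kk_refl (τ : ℂ) (j : ℤ) : kk τ (6 - j) = kk τ j := by
  unfold kk
  have e : ((6 - j : ℤ) : ℂ) * τ / 6 = -(j * τ / 6) + τ := by push_cast; ring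
  rw [e, th_add_tau, th_neg]
  have : cexp (π * Complex.I * τ / 36 * ((6 - j : ℤ) : ℂ) ^ 2) *
      cexp (-π * Complex.I * τ - 2 * π * Complex.I * -(j * τ / 6)) = cexp (π * Complex.I * τ / 36 * j ^ 2) := by
    rw [← Complex.exp_add]; congr 1; push_cast; ring
  linear_combination th (j * τ / 6) τ * this

lemma hh_neg (τ : ℂ) (j : ℤ) : hh τ (-j) = hh τ j := by
  unfold hh
  have e : ((-j : ℤ) : ℂ) * τ / 6 + 1 / 2 = -(j * τ / 6 + 1 / 2) + 1 := by push_cast; ring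
  rw [e, th_add_one, th_neg]
  push_cast
  rw [neg_neg, neg_sq]

lemma hh_add (τ : ℂ) (j : ℤ) : hh τ (j + 6) = hh τ j := by
  unfold hh
  have e : ((j + 6 : ℤ) : ℂ) * τ / 6 + 1 / 2 = (j * τ / 6 + 1 / 2) + τ := by push_cast; ring
  rw [e, th_add_tau]
  have h1 : cexp (-π * Complex.I * τ - 2 * π * Complex.I * (j * τ / 6 + 1 / 2)) =
      -cexp (-π * Complex.I * τ - 2 * π * Complex.I * (j * τ / 6)) := by
    rw [← neg_neg (cexp (-π * Complex.I * τ - 2 * π * Complex.I * (j * τ / 6 + 1 / 2)))]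
    congr 1
    symm
    apply s13_exp_eq_neg; ring
  rw [h1]
  have : cexp (π * Complex.I * τ / 36 * ((j + 6 : ℤ) : ℂ) ^ 2) *
      cexp (-π * Complex.I * τ - 2 * π * Complex.I * (j * τ / 6)) = cexp (π * Complex.I * τ / 36 * j ^ 2) := by
    rw [← Complex.exp_add]; congr 1; push_cast; ring
  linear_combination th (j * τ / 6 + 1 / 2) τ * this

lemma kk_hh {τ : ℂ} (hτ : 0 < τ.im) : ∃ a b a' b' : ℤ → ℂ,
    (∀ m n, kk τ (m + n) * kk τ (m - n) = a m * b n - b m * a n) ∧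
    (∀ m n, hh τ (m + n) * hh τ (m - n) = a' m * b n - b' m * a n) ∧
    (∀ m n, -(kk τ (m + n) * kk τ (m - n)) = a' m * b' n - b' m * a' n) := by
  obtain ⟨A, B, h⟩ := th_mul hτ
  have hE : ∀ m n : ℤ, cexp (π * Complex.I * τ / 36 * ((m + n : ℤ) : ℂ) ^ 2) *
      cexp (π * Complex.I * τ / 36 * ((m - n : ℤ) : ℂ) ^ 2) =
      cexp (π * Complex.I * τ / 36 * (2 * m ^ 2)) * cexp (π * Complex.I * τ / 36 * (2 * n ^ 2)) := by
    intro m n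
    rw [← Complex.exp_add, ← Complex.exp_add]; congr 1; push_cast; ring
  refine ⟨fun m => cexp (π * Complex.I * τ / 36 * (2 * m ^ 2)) * A (m * τ / 6),
    fun m => cexp (π * Complex.I * τ / 36 * (2 * m ^ 2)) * B (m * τ / 6),
    fun m => cexp (π * Complex.I * τ / 36 * (2 * m ^ 2)) * A (m * τ / 6 + 1 / 2),
    fun m => cexp (π * Complex.I * τ / 36 * (2 * m ^ 2)) * B (m * τ / 6 + 1 / 2), ?_, ?_, ?_⟩
  · intro m n
    have h1 := h (m * τ / 6) (n * τ / 6)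
    have e1 : ((m + n : ℤ) : ℂ) * τ / 6 = m * τ / 6 + n * τ / 6 := by push_cast; ring
    have e2 : ((m - n : ℤ) : ℂ) * τ / 6 = m * τ / 6 - n * τ / 6 := by push_cast; ring
    unfold kk
    rw [e1, e2, mul_mul_mul_comm, hE, h1]; ring
  · intro m n
    have h1 := h (m * τ / 6 + 1 / 2) (n * τ / 6)
    have e1 : ((m + n : ℤ) : ℂ) * τ / 6 + 1 / 2 = m * τ / 6 + 1 / 2 + n * τ / 6 := by
      push_cast; ring
    have e2 : ((m - n : ℤ) : ℂ) * τ / 6 + 1 / 2 = m * τ / 6 + 1 / 2 - n * τ / 6 := by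
      push_cast; ring
    unfold hh
    rw [e1, e2, mul_mul_mul_comm, hE, h1]; ring
  · intro m n
    have h1 := h (m * τ / 6 + 1 / 2) (n * τ / 6 + 1 / 2)
    have e1 : m * τ / 6 + 1 / 2 + (n * τ / 6 + 1 / 2) = ((m + n : ℤ) : ℂ) * τ / 6 + 1 := by
      push_cast; ring
    have e2 : m * τ / 6 + 1 / 2 - (n * τ / 6 + 1 / 2) = ((m - n : ℤ) : ℂ) * τ / 6 := by
      push_cast; ring
    rw [e1, e2, th_add_one] at h1
    unfold kk
    rw [mul_mul_mul_comm, hE]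
    linear_combination (cexp (π * Complex.I * τ / 36 * (2 * m ^ 2)) * cexp (π * Complex.I * τ / 36 * (2 * n ^ 2))) * h1

lemma kk_rel {τ : ℂ} (hτ : 0 < τ.im) :
    kk τ 1 ^ 4 - kk τ 2 ^ 4 + kk τ 3 ^ 3 * kk τ 1 = 0 ∧
    kk τ 3 * kk τ 1 * hh τ 0 ^ 2 - kk τ 2 ^ 2 * hh τ 1 ^ 2 + kk τ 1 ^ 2 * hh τ 2 ^ 2 = 0 ∧
    hh τ 1 ^ 4 - hh τ 2 * hh τ 0 ^ 3 = kk τ 1 ^ 4 ∧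
    hh τ 2 ^ 4 - hh τ 2 * hh τ 0 ^ 3 = kk τ 2 ^ 4 := by
  obtain ⟨a, b, a', b', h1, h2, h3⟩ := kk_hh hτ
  have k5 : kk τ 5 = kk τ 1 := by simpa using kk_refl τ 1
  have k4 : kk τ 4 = kk τ 2 := by simpa using kk_refl τ 2
  have n1 : hh τ (-1) = hh τ 1 := hh_neg τ 1
  have n2 : hh τ (-2) = hh τ 2 := hh_neg τ 2
  have h4 : hh τ 4 = hh τ 2 := by rw [← n2, ← hh_add τ (-2)]; norm_num
  have w32 := h1 3 2
  have w10 := h1 1 0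
  have w31 := h1 3 1
  have w20 := h1 2 0
  have w30 := h1 3 0
  have w21 := h1 2 1
  have v00 := h2 0 0
  have v01 := h2 0 1
  have v02 := h2 0 2
  have v10 := h2 1 0
  have v11 := h2 1 1
  have v20 := h2 2 0
  have v22 := h2 2 2
  have x10 := h3 1 0
  have x20 := h3 2 0
  norm_num [k5, k4, n1, n2, h4] at w32 w10 w31 w20 w30 w21 v00 v01 v02 v10 v11 v20 v22 x10 x20
  refine ⟨?_, ?_, ?_, ?_⟩
  · have : kk τ 1 ^ 4 - kk τ 2 ^ 4 + kk τ 3 ^ 3 * kk τ 1 =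
      (kk τ 1 * kk τ 1) * (kk τ 1 * kk τ 1) - (kk τ 2 * kk τ 2) * (kk τ 2 * kk τ 2) +
      (kk τ 3 * kk τ 3) * (kk τ 3 * kk τ 1) := by ring
    rw [this]
    have e1 : kk τ 1 * kk τ 1 = a 3 * b 2 - b 3 * a 2 := by linear_combination w32
    have e2 : kk τ 2 * kk τ 2 = a 3 * b 1 - b 3 * a 1 := by linear_combination w31
    have e3 : kk τ 3 * kk τ 3 = a 3 * b 0 - b 3 * a 0 := by linear_combination w30
    have e4 : kk τ 1 * kk τ 1 = a 1 * b 0 - b 1 * a 0 := by linear_combination w10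
    have e5 : kk τ 2 * kk τ 2 = a 2 * b 0 - b 2 * a 0 := by linear_combination w20
    rw [w21]
    nth_rewrite 1 [e1]
    nth_rewrite 1 [e2]
    rw [e3, e4, e5]; ring
  · linear_combination (hh τ 0 ^ 2) * w21 + (a 2 * b 1 - b 2 * a 1) * v00 -
      (hh τ 1 ^ 2) * w20 - (a 2 * b 0 - b 2 * a 0) * v01 +
      (hh τ 2 ^ 2) * w10 + (a 1 * b 0 - b 1 * a 0) * v02
  · linear_combination (hh τ 1 ^ 2) * v01 + (a' 0 * b 1 - b' 0 * a 1) * v10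
      - (hh τ 2 * hh τ 0) * v00 - (a' 0 * b 0 - b' 0 * a 0) * v11 + (kk τ 1 ^ 2) * x10
      + (a' 1 * b' 0 - b' 1 * a' 0) * w10
  · linear_combination (hh τ 2 ^ 2) * v02 + (a' 0 * b 2 - b' 0 * a 2) * v20
      - (hh τ 2 * hh τ 0) * v00 - (a' 0 * b 0 - b' 0 * a 0) * v22 + (kk τ 2 ^ 2) * x20
      + (a' 2 * b' 0 - b' 2 * a' 0) * w20

lemma s13_alg {m κ P Q R : ℂ} (hm : m ^ 2 = 9) (hκ : κ ^ 3 = 8) (hP : P ≠ 0)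
    (h2 : κ * P - m * Q + R = 0) (h3 : (Q ^ 2 - 1) ^ 2 = R * P ^ 3) (h4 : R ^ 2 - Q ^ 2 = 8) :
    False := by
  have hR : R = m * Q - κ * P := by linear_combination h2
  have hκ0 : κ ≠ 0 := by rintro rfl; norm_num at hκ
  subst hR
  have hA : 8 * Q ^ 2 - 2 * m * κ * P * Q + κ ^ 2 * P ^ 2 = 8 := by
    linear_combination h4 - Q ^ 2 * hm
  have hB : P ^ 2 * (12 * Q ^ 2 - 4 * m * κ * P * Q + 3 * κ ^ 2 * P ^ 2) = 0 := by
    have e : 8 * (Q ^ 2 - 1) = κ * P * (2 * m * Q - κ * P) := by linear_combination hA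
    have e2 : κ * (κ * P * (2 * m * Q - κ * P)) ^ 2 = 64 * κ * ((m * Q - κ * P) * P ^ 3) := by
      rw [← e, ← h3]; ring
    linear_combination e2 / 24 - (P ^ 2 * (2 * m * Q - κ * P) ^ 2 / 24) * hκ
      - (4 * P ^ 2 * Q ^ 2 / 3) * hm
  have hB' := (mul_eq_zero.mp hB).resolve_left (pow_ne_zero 2 hP)
  have hm' : (m - 3) * (m + 3) = 0 := by linear_combination hm
  have h0 : ∀ x : ℂ, 3 * x ^ 2 = 0 → x = 0 := by intro x hx; simpa using hx
  rcases mul_eq_zero.mp hm' with h | h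
  · have h5 := h0 (2 * Q - κ * P) (by linear_combination hB' + 4 * κ * P * Q * h)
    have : (8 : ℂ) = 0 := by
      linear_combination -hA - 2 * κ * P * Q * h + (4 * Q - κ * P) * h5
    norm_num at this
  · have h5 := h0 (2 * Q + κ * P) (by linear_combination hB' + 4 * κ * P * Q * h)
    have : (8 : ℂ) = 0 := by
      linear_combination -hA - 2 * κ * P * Q * h + (4 * Q + κ * P) * h5
    norm_num at this

lemma kk_ne {τ : ℂ} (hτ : 0 < τ.im) {j : ℤ} (h0 : 0 < j) (h6 : j < 6) : kk τ j ≠ 0 := by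
  unfold kk
  have e : ((j : ℂ) * τ / 6).im = j * τ.im / 6 := by
    have : (j : ℂ) * τ / 6 = ((j / 6 : ℝ) : ℂ) * τ := by push_cast; ring
    rw [this, Complex.im_ofReal_mul]; ring
  have h0' : (0 : ℝ) < j := by exact_mod_cast h0
  have h6' : (j : ℝ) < 6 := by exact_mod_cast h6
  refine mul_ne_zero (Complex.exp_ne_zero _) (th_ne_zero' hτ ?_ ?_)
  · rw [e]; positivity
  · rw [e]; nlinarith

lemma hh_zero_ne {τ : ℂ} (hτ : 0 < τ.im) : hh τ 0 ≠ 0 := by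
  unfold hh
  refine mul_ne_zero (Complex.exp_ne_zero _) (th_ne_zero hτ ?_ ?_ ?_)
  · norm_num; exact hτ
  · norm_num; exact hτ
  · have : (2 * π * Complex.I * (((0 : ℤ) : ℂ) * τ / 6 + 1 / 2)) = π * Complex.I := by push_cast; ring
    rw [this, Complex.exp_pi_mul_I]; norm_num

lemma FF_eq_kk (τ : ℂ) : FF 1 0 τ = (kk τ 3 / kk τ 1) ^ 3 := by
  unfold FF kk Kf
  congr 2
  · congr 2 <;> (push_cast; ring)
  · congr 2 <;> (push_cast; ring)

lemma FF_omit {τ : ℂ} (hτ : 0 < τ.im) : FF 1 0 τ ≠ 0 ∧ FF 1 0 τ ≠ 8 ∧ FF 1 0 τ ≠ -1 := by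
  rw [FF_eq_kk]
  have k1 := kk_ne hτ (j := 1) (by norm_num) (by norm_num)
  have k2 := kk_ne hτ (j := 2) (by norm_num) (by norm_num)
  have k3 := kk_ne hτ (j := 3) (by norm_num) (by norm_num)
  have h0 := hh_zero_ne hτ
  obtain ⟨r1, r2, r3, r4⟩ := kk_rel hτ
  refine ⟨pow_ne_zero 3 (div_ne_zero k3 k1), ?_, ?_⟩
  · intro h8
    have h8' : kk τ 3 ^ 3 = 8 * kk τ 1 ^ 3 := by
      rw [div_pow, div_eq_iff (pow_ne_zero 3 k1)] at h8; exact h8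
    refine s13_alg (m := kk τ 2 ^ 2 / kk τ 1 ^ 2) (κ := kk τ 3 / kk τ 1)
      (P := hh τ 0 ^ 2 / kk τ 1 ^ 2) (Q := hh τ 1 ^ 2 / kk τ 1 ^ 2) (R := hh τ 2 ^ 2 / kk τ 1 ^ 2)
      ?_ h8 (div_ne_zero (pow_ne_zero 2 h0) (pow_ne_zero 2 k1)) ?_ ?_ ?_
    · field_simp
      linear_combination -r1 + kk τ 1 * h8'
    · field_simp
      linear_combination r2
    · field_simp
      linear_combination (hh τ 1 ^ 4 - kk τ 1 ^ 4 + hh τ 2 * hh τ 0 ^ 3) * r3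
    · field_simp
      linear_combination r4 - r3 - r1 + kk τ 1 * h8'
  · intro h
    rw [div_pow, div_eq_iff (pow_ne_zero 3 k1)] at h
    have : kk τ 2 ^ 4 = 0 := by linear_combination -r1 + kk τ 1 * h
    exact k2 (by simpa using this)

/-- The filter of neighbourhoods of `i∞`. -/
def LL : Filter ℂ := Filter.comap Complex.im Filter.atTop

/-- The normalised theta series. -/
def JJ (r s : ℝ) (τ : ℂ) : ℂ := jacobiTheta₂ (r * τ + s + 1 / 2 - τ / 2) τ

lemma LL_im : Filter.Tendsto Complex.im LL Filter.atTop := Filter.tendsto_comap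

lemma JJ_term (r s : ℝ) (n : ℤ) (τ : ℂ) :
    jacobiTheta₂_term n (r * τ + s + 1 / 2 - τ / 2) τ =
      cexp (2 * π * Complex.I * n * (s + 1 / 2)) * cexp (π * Complex.I * ((n ^ 2 - n + 2 * n * r : ℝ) : ℂ) * τ) := by
  rw [jacobiTheta₂_term, ← Complex.exp_add]
  congr 1; push_cast; ring

lemma JJ_norm (r s : ℝ) (n : ℤ) (τ : ℂ) :
    ‖jacobiTheta₂_term n (r * τ + s + 1 / 2 - τ / 2) τ‖ =
      Real.exp (-(π * (n ^ 2 - n + 2 * n * r) * τ.im)) := by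
  rw [JJ_term, norm_mul, Complex.norm_exp, Complex.norm_exp]
  have h1 : (2 * π * Complex.I * n * (s + 1 / 2)).re = 0 := by
    have : 2 * π * Complex.I * n * (s + 1 / 2) = ((2 * π * n * (s + 1 / 2) : ℝ) : ℂ) * Complex.I := by
      push_cast; ring
    rw [this, Complex.re_ofReal_mul]; simp
  have h2 : (π * Complex.I * ((n ^ 2 - n + 2 * n * r : ℝ) : ℂ) * τ).re =
      -(π * (n ^ 2 - n + 2 * n * r) * τ.im) := by
    have : π * Complex.I * ((n ^ 2 - n + 2 * n * r : ℝ) : ℂ) * τ =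
      ((π * (n ^ 2 - n + 2 * n * r) : ℝ) : ℂ) * (Complex.I * τ) := by push_cast; ring
    rw [this, Complex.re_ofReal_mul]; simp
  rw [h1, h2, Real.exp_zero, one_mul]

lemma JJ_exp_nonneg {r : ℝ} (h0 : 0 ≤ r) (h1 : r ≤ 1) (n : ℤ) :
    0 ≤ (n : ℝ) ^ 2 - n + 2 * n * r := by
  rcases le_or_gt n 0 with h | h
  · rcases eq_or_lt_of_le h with h | h
    · subst h; simp
    · have : (n : ℝ) ≤ -1 := by exact_mod_cast (by omega : n ≤ -1)
      nlinarith
  · have : (1 : ℝ) ≤ n := by exact_mod_cast h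
    nlinarith [mul_nonneg (by linarith : (0 : ℝ) ≤ n) h0]

lemma JJ_lim {r : ℝ} (h0 : 0 ≤ r) (h1 : r ≤ 1) (s : ℝ) :
    Filter.Tendsto (JJ r s) LL (nhds (∑' n : ℤ, if (n : ℝ) ^ 2 - n + 2 * n * r = 0 then
      cexp (2 * π * Complex.I * n * (s + 1 / 2)) else 0)) := by
  unfold JJ jacobiTheta₂
  refine tendsto_tsum_of_dominated_convergence
    (bound := fun n : ℤ => ‖jacobiTheta₂_term n (r * Complex.I + s + 1 / 2 - Complex.I / 2) Complex.I‖) ?_ ?_ ?_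
  · exact ((summable_jacobiTheta₂_term_iff _ _).mpr (by simp)).norm
  · intro n
    simp only [JJ_term]
    split_ifs with h
    · rw [h]; simpa using tendsto_const_nhds
    · have hp : 0 < (n : ℝ) ^ 2 - n + 2 * n * r := lt_of_le_of_ne (JJ_exp_nonneg h0 h1 n) (Ne.symm h)
      rw [tendsto_zero_iff_norm_tendsto_zero]
      simp only [← JJ_term, JJ_norm]
      apply Real.tendsto_exp_neg_atTop_nhds_zero.comp
      exact LL_im.const_mul_atTop (mul_pos Real.pi_pos hp)
  · filter_upwards [LL_im.eventually_ge_atTop 1] with τ hτ n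
    rw [JJ_norm, JJ_norm, Real.exp_le_exp]
    have := mul_nonneg Real.pi_pos.le (JJ_exp_nonneg h0 h1 n)
    simp only [Complex.I_im]
    nlinarith

lemma JJ_lim_pos {r : ℝ} (h0 : 0 < r) (h1 : r < 1) (s : ℝ) :
    Filter.Tendsto (JJ r s) LL (nhds 1) := by
  have h := JJ_lim h0.le h1.le s
  rw [tsum_eq_single 0] at h
  · simpa using h
  · intro n hn
    rw [if_neg]
    rcases lt_or_gt_of_ne hn with h | h
    · have : (n : ℝ) ≤ -1 := by exact_mod_cast (by omega : n ≤ -1)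
      nlinarith
    · have : (1 : ℝ) ≤ n := by exact_mod_cast h
      nlinarith [mul_pos (by linarith : (0 : ℝ) < n) h0]

lemma JJ_lim_zero (s : ℝ) :
    Filter.Tendsto (JJ 0 s) LL (nhds (1 - cexp (2 * π * Complex.I * s))) := by
  have h := JJ_lim le_rfl zero_le_one s
  rw [tsum_eq_sum (s := {0, 1})] at h
  · have e : cexp (2 * π * Complex.I * (s + 2⁻¹)) = -cexp (2 * π * Complex.I * s) := by
      apply s13_exp_eq_neg; ring
    rw [Finset.sum_pair (by norm_num)] at h
    simpa [e, ← sub_eq_add_neg] using h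
  · intro n hn
    rw [if_neg]
    intro h
    have : ((n * (n - 1) : ℤ) : ℝ) = 0 := by push_cast; linarith
    have : n * (n - 1) = 0 := by exact_mod_cast this
    rcases mul_eq_zero.mp this with h | h
    · simp [h] at hn
    · have : n = 1 := by omega
      simp [this] at hn

lemma Kf_JJ (r s : ℝ) (τ : ℂ) :
    Kf r s τ = cexp (π * Complex.I * ((r - 1) * (r * τ + s) + τ / 4)) * JJ r s τ := by
  unfold Kf th JJ
  rw [← mul_assoc, ← Complex.exp_add]
  congr 2; ring

lemma Kf_ratio (r s r' s' : ℝ) (τ : ℂ) : Kf r s τ / Kf r' s' τ =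
    cexp (π * Complex.I * ((r - 1) * (r * τ + s) - (r' - 1) * (r' * τ + s'))) * (JJ r s τ / JJ r' s' τ) := by
  rw [Kf_JJ, Kf_JJ, mul_div_mul_comm, ← Complex.exp_sub]
  congr 2; ring

lemma exp_lim {c : ℝ} (hc : 0 < c) (d : ℂ) :
    Filter.Tendsto (fun τ : ℂ => cexp (π * Complex.I * (c * τ + d))) LL (nhds 0) := by
  rw [tendsto_zero_iff_norm_tendsto_zero]
  have : ∀ τ : ℂ, ‖cexp (π * Complex.I * (c * τ + d))‖ = Real.exp (-((π * c) * τ.im + π * d.im)) := by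
    intro τ
    rw [Complex.norm_exp, mul_assoc, Complex.re_ofReal_mul]
    congr 1; simp; ring
  simp only [this]
  apply Real.tendsto_exp_neg_atTop_nhds_zero.comp
  exact Filter.tendsto_atTop_add_const_right _ _ (LL_im.const_mul_atTop (mul_pos Real.pi_pos hc))

lemma exp_lim' {c : ℝ} (hc : c < 0) (d : ℂ) :
    Filter.Tendsto (fun τ : ℂ => ‖cexp (π * Complex.I * (c * τ + d))‖) LL Filter.atTop := by
  have : ∀ τ : ℂ, ‖cexp (π * Complex.I * (c * τ + d))‖ = Real.exp (-(π * c) * τ.im + -(π * d.im)) := by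
    intro τ
    rw [Complex.norm_exp, mul_assoc, Complex.re_ofReal_mul]
    congr 1; simp; ring
  simp only [this]
  apply Real.tendsto_exp_atTop.comp
  exact Filter.tendsto_atTop_add_const_right _ _ (LL_im.const_mul_atTop
    (neg_pos.mpr (mul_neg_of_pos_of_neg Real.pi_pos hc)))

lemma FF_lim1 (b : ℤ) : Filter.Tendsto (fun τ => ‖FF 1 b τ‖) LL Filter.atTop := by
  have e : ∀ τ, ‖FF 1 b τ‖ = (‖cexp (π * Complex.I * (((-1 / 9 : ℝ) : ℂ) * τ + -(b / 9)))‖ *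
      ‖JJ (1 / 2) (b / 2) τ / JJ (1 / 6) (b / 6) τ‖) ^ 3 := by
    intro τ
    rw [← norm_mul, ← norm_pow, FF]
    have := Kf_ratio (1 / 2) (b / 2) (1 / 6) (b / 6) τ
    push_cast at this
    push_cast
    rw [this]
    congr 4; ring
  simp only [e]
  refine (Filter.tendsto_pow_atTop (by norm_num)).comp ?_
  refine Filter.Tendsto.atTop_mul_pos one_pos (exp_lim' (by norm_num) _) ?_
  have := ((JJ_lim_pos (r := 1 / 2) (by norm_num) (by norm_num) (b / 2)).div
    (JJ_lim_pos (r := 1 / 6) (by norm_num) (by norm_num) (b / 6)) one_ne_zero).norm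
  simpa using this

lemma FF_lim2 (b : ℤ) : Filter.Tendsto (FF 2 b) LL (nhds 0) := by
  have e : ∀ τ, FF 2 b τ = (-cexp (-(π * Complex.I * (b / 2))) *
      (cexp (π * Complex.I * (((2 / 9 : ℝ) : ℂ) * τ + (-b / 2 + b / 9))) *
      (JJ 0 (b / 2) τ / JJ (1 / 3) (b / 6) τ))) ^ 3 := by
    intro τ
    rw [FF]
    have := Kf_ratio 0 (b / 2) (1 / 3) (b / 6) τ
    push_cast at this
    push_cast
    have e1 : (2 : ℂ) / 2 = 0 + 1 := by norm_num
    have e2 : (2 : ℂ) / 6 = 1 / 3 := by norm_num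
    rw [e1, e2, Kf_add_left, mul_div_assoc, this]
    congr 4; ring_nf
  have h := (((exp_lim (c := 2 / 9) (by norm_num) (-(b : ℂ) / 2 + b / 9)).mul
    ((JJ_lim_zero (b / 2)).div
    (JJ_lim_pos (r := 1 / 3) (by norm_num) (by norm_num) (b / 6)) one_ne_zero)).const_mul
    (-cexp (-(π * Complex.I * (b / 2))))).pow 3
  simp only [zero_mul, mul_zero] at h
  rw [zero_pow (by norm_num)] at h
  exact h.congr (fun τ => (e τ).symm)

lemma FF_lim3 (b : ℤ) : Filter.Tendsto (FF 3 b) LL (nhds (-1)) := by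
  have e : ∀ τ, FF 3 b τ = (-cexp (-(π * Complex.I * (b / 2))) *
      (cexp (π * Complex.I * (-b / 6)) *
      (JJ (1 / 2) (b / 2) τ / JJ (1 / 2) (b / 6) τ))) ^ 3 := by
    intro τ
    rw [FF]
    have := Kf_ratio (1 / 2) (b / 2) (1 / 2) (b / 6) τ
    push_cast at this
    push_cast
    have e1 : (3 : ℂ) / 2 = 1 / 2 + 1 := by norm_num
    have e2 : (3 : ℂ) / 6 = 1 / 2 := by norm_num
    rw [e1, e2, Kf_add_left, mul_div_assoc, this]
    congr 4; ring_nf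
  have h := ((((JJ_lim_pos (r := 1 / 2) (by norm_num) (by norm_num) (b / 2)).div
    (JJ_lim_pos (r := 1 / 2) (by norm_num) (by norm_num) (b / 6)) one_ne_zero).const_mul
    (cexp (π * Complex.I * (-b / 6)))).const_mul (-cexp (-(π * Complex.I * (b / 2))))).pow 3
  have e4 : (-cexp (-(π * Complex.I * (b / 2))) * (cexp (π * Complex.I * (-b / 6)) * (1 / 1))) ^ 3 = -1 := by
    have : (cexp (-(π * Complex.I * (b / 2))) * cexp (π * Complex.I * (-b / 6))) ^ 3 = 1 := by
      rw [← Complex.exp_add, ← Complex.exp_nat_mul, ← Complex.exp_zero]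
      apply s13_exp_eq (-b); push_cast; ring
    linear_combination -this
  rw [e4] at h
  exact h.congr (fun τ => (e τ).symm)

lemma FF_lim0 : Filter.Tendsto (FF 0 1) LL (nhds 8) := by
  have e : ∀ τ, FF 0 1 τ = (cexp (π * Complex.I * (-1 / 3)) *
      (JJ 0 (1 / 2) τ / JJ 0 (1 / 6) τ)) ^ 3 := by
    intro τ
    rw [FF]
    have := Kf_ratio 0 (1 / 2) 0 (1 / 6) τ
    push_cast at this
    push_cast
    rw [zero_div, zero_div, this]
    congr 4; ring
  have z1 : cexp (2 * π * Complex.I * ((1 / 2 : ℝ) : ℂ)) = -1 := by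
    rw [← Complex.exp_pi_mul_I]; congr 1; push_cast; ring
  set w := cexp (2 * π * Complex.I * ((1 / 6 : ℝ) : ℂ)) with hw
  have w3 : w ^ 3 = -1 := by
    rw [hw, ← Complex.exp_nat_mul, ← Complex.exp_pi_mul_I]; congr 1; push_cast; ring
  have w1 : w ≠ -1 := by
    intro h
    have := congrArg Complex.re h
    rw [hw, show 2 * π * Complex.I * ((1 / 6 : ℝ) : ℂ) = ((π / 3 : ℝ) : ℂ) * Complex.I by push_cast; ring,
      Complex.exp_ofReal_mul_I_re, Real.cos_pi_div_three] at this
    norm_num at this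
  have w2 : w ^ 2 - w + 1 = 0 := by
    have : (w + 1) * (w ^ 2 - w + 1) = 0 := by linear_combination w3
    exact (mul_eq_zero.mp this).resolve_left (fun h => w1 (by linear_combination h))
  have wn : 1 - w ≠ 0 := by
    intro h
    have : w = 1 := by linear_combination -h
    rw [this] at w2; norm_num at w2
  have h := (((JJ_lim_zero (1 / 2)).div (JJ_lim_zero (1 / 6)) wn).const_mul
    (cexp (π * Complex.I * (-1 / 3)))).pow 3
  have e4 : (cexp (π * Complex.I * (-1 / 3)) * ((1 - cexp (2 * π * Complex.I * ((1 / 2 : ℝ) : ℂ))) / (1 - w))) ^ 3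
      = 8 := by
    have : cexp (π * Complex.I * (-1 / 3)) ^ 3 = -1 := by
      rw [← Complex.exp_nat_mul]
      refine (s13_exp_eq (-1) ?_).trans Complex.exp_pi_mul_I
      push_cast; ring
    rw [z1, mul_pow, this, div_pow]
    have : (1 - w) ^ 3 = -1 := by linear_combination (-w + 2) * w2
    rw [this]; norm_num
  rw [e4] at h
  exact h.congr (fun τ => (e τ).symm)

lemma far_of_tendsto {f : ℂ → ℂ} {l c : ℂ} (h : Filter.Tendsto f LL (nhds l)) (hc : c ≠ l) :
    ∃ ε > 0, ∀ᶠ τ in LL, ε ≤ ‖f τ - c‖ := by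
  have h1 := (h.sub_const c).norm
  have h2 : 0 < ‖l - c‖ := norm_pos_iff.mpr (sub_ne_zero.mpr hc.symm)
  exact ⟨‖l - c‖ / 2, half_pos h2, h1.eventually_const_le (half_lt_self h2)⟩

lemma FF_far {a b : ℤ} (hab : IsCoprime a b) {c : ℂ} (h0 : c ≠ 0) (h8 : c ≠ 8) (h1 : c ≠ -1) :
    ∃ ε > 0, ∀ᶠ τ in LL, ε ≤ ‖FF a b τ - c‖ := by
  have far1 : ∀ b : ℤ, ∃ ε > 0, ∀ᶠ τ in LL, ε ≤ ‖FF 1 b τ - c‖ := by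
    intro b
    refine ⟨1, one_pos, ?_⟩
    filter_upwards [(FF_lim1 b).eventually_ge_atTop (‖c‖ + 1)] with τ hτ
    have := norm_sub_norm_le (FF 1 b τ) c
    linarith
  have key : ∀ a b : ℤ, IsCoprime a b → (a % 6 = 0 ∨ a % 6 = 1 ∨ a % 6 = 2 ∨ a % 6 = 3) →
      ∃ ε > 0, ∀ᶠ τ in LL, ε ≤ ‖FF a b τ - c‖ := by
    intro a b hab h
    have e : FF a b = FF (a % 6) (b % 6) := funext (FF_mod a b)
    rw [e]
    rcases h with h | h | h | h
    · have hb : b % 6 = 1 ∨ b % 6 = 5 := by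
        obtain ⟨u, v, huv⟩ := hab
        have hg : ∀ p : ℤ, 1 < p → p ∣ a → p ∣ b → False := by
          intro p hp ha hb
          have : p ∣ 1 := huv ▸ dvd_add (ha.mul_left u) (hb.mul_left v)
          have := Int.le_of_dvd one_pos this
          omega
        have g2 : ¬ (2 : ℤ) ∣ b := hg 2 (by norm_num) (by omega)
        have g3 : ¬ (3 : ℤ) ∣ b := hg 3 (by norm_num) (by omega)
        omega
      have e1 : FF (a % 6) (b % 6) = FF 0 1 := by
        rw [h]
        rcases hb with hb | hb
        · rw [hb]
        · rw [hb]
          funext τ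
          rw [← FF_neg, FF_mod (-0) (-5)]
          norm_num
      rw [e1]
      exact far_of_tendsto FF_lim0 h8
    · rw [h]; exact far1 _
    · rw [h]; exact far_of_tendsto (FF_lim2 _) h0
    · rw [h]; exact far_of_tendsto (FF_lim3 _) h1
  by_cases h : a % 6 = 0 ∨ a % 6 = 1 ∨ a % 6 = 2 ∨ a % 6 = 3
  · exact key a b hab h
  · have := key (-a) (-b) hab.neg_neg (by omega)
    have e : FF (-a) (-b) = FF a b := funext (FF_neg a b)
    rwa [e] at this

lemma Kf_diff (r s : ℂ) {τ : ℂ} (hτ : 0 < τ.im) : DifferentiableAt ℂ (fun τ => Kf r s τ) τ := by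
  unfold Kf th
  have h := (hasFDerivAt_jacobiTheta₂ (r * τ + s + 1 / 2 - τ / 2) hτ).differentiableAt
  have h2 : DifferentiableAt ℂ (fun τ : ℂ => jacobiTheta₂ (r * τ + s + 1 / 2 - τ / 2) τ) τ :=
    DifferentiableAt.comp (f := fun τ : ℂ => (r * τ + s + 1 / 2 - τ / 2, τ)) τ h (by fun_prop)
  fun_prop

lemma FF_diff {τ : ℂ} (hτ : 0 < τ.im) : DifferentiableAt ℂ (FF 1 0) τ := by
  have h : Kf ((1 : ℤ) / 6) ((0 : ℤ) / 6) τ ≠ 0 := by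
    have := kk_ne hτ (j := 1) (by norm_num) (by norm_num)
    intro h0
    apply this
    rw [← h0]
    unfold kk Kf
    congr 2 <;> (push_cast; ring)
  exact ((Kf_diff _ _ hτ).div (Kf_diff _ _ hτ) h).pow 3

lemma FF_cont : Continuous (fun τ : ℍ => FF 1 0 τ) := by
  rw [continuous_iff_continuousAt]
  intro τ
  exact (FF_diff τ.2).continuousAt.comp UpperHalfPlane.continuous_coe.continuousAt

lemma FF_smul (γ : SL(2, ℤ)) (τ : ℍ) : FF 1 0 ((γ • τ : ℍ) : ℂ) = FF (γ 0 0) (γ 0 1) τ := by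
  rw [FF_SL]; congr 1 <;> ring

lemma FF_sep (γ : SL(2, ℤ)) {c : ℂ} (h0 : c ≠ 0) (h8 : c ≠ 8) (h1 : c ≠ -1)
    (hc : ∀ τ : ℍ, FF 1 0 τ ≠ c) :
    ∃ ε > 0, ∀ z ∈ ModularGroup.fd, ε ≤ ‖FF (γ 0 0) (γ 0 1) (z : ℍ) - c‖ := by
  have hcop : IsCoprime (γ 0 0) (γ 0 1) := by
    have hd := γ.det_coe
    rw [Matrix.det_fin_two] at hd
    exact ⟨γ 1 1, -γ 1 0, by linear_combination hd⟩
  obtain ⟨ε, hε, h⟩ := FF_far hcop h0 h8 h1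
  rw [LL, Filter.eventually_comap] at h
  obtain ⟨M, hM⟩ := Filter.eventually_atTop.mp h
  have hcont : Continuous (fun z : ℍ => ‖FF (γ 0 0) (γ 0 1) (z : ℍ) - c‖) := by
    have : (fun z : ℍ => FF (γ 0 0) (γ 0 1) (z : ℍ)) =
      (fun τ : ℍ => FF 1 0 τ) ∘ (fun z : ℍ => γ • z) := by
      funext z; exact (FF_smul γ z).symm
    have h2 : Continuous (fun z : ℍ => FF (γ 0 0) (γ 0 1) (z : ℍ)) := by
      rw [this]; exact FF_cont.comp (continuous_const_smul (γ : GL (Fin 2) ℝ))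
    exact (h2.sub continuous_const).norm
  obtain ⟨δ, hδ, h'⟩ := (ModularGroup.isCompact_truncatedFundamentalDomain M).exists_forall_le'
    (a := 0) hcont.continuousOn (by
      intro z _
      rw [norm_pos_iff, sub_ne_zero, ← FF_smul]
      exact hc _)
  refine ⟨min ε δ, lt_min hε hδ, fun z hz => ?_⟩
  rcases le_total z.im M with hzM | hzM
  · exact (min_le_right _ _).trans (h' z ⟨hz, hzM⟩)
  · exact (min_le_left _ _).trans (hM z.im hzM z rfl)

lemma FF_sep_all {c : ℂ} (h0 : c ≠ 0) (h8 : c ≠ 8) (h1 : c ≠ -1)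
    (hc : ∀ τ : ℍ, FF 1 0 τ ≠ c) : ∃ ε > 0, ∀ τ : ℍ, ε ≤ ‖FF 1 0 τ - c‖ := by
  have key : ∀ p : Fin 6 × Fin 6, ∃ ε : ℝ, 0 < ε ∧ ∀ γ : SL(2, ℤ),
      (γ 0 0 % 6 = (p.1 : ℕ) ∧ γ 0 1 % 6 = (p.2 : ℕ)) →
      ∀ z ∈ ModularGroup.fd, ε ≤ ‖FF (γ 0 0) (γ 0 1) (z : ℍ) - c‖ := by
    intro p
    by_cases hp : ∃ γ : SL(2, ℤ), γ 0 0 % 6 = (p.1 : ℕ) ∧ γ 0 1 % 6 = (p.2 : ℕ)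
    · obtain ⟨γ, hγ⟩ := hp
      obtain ⟨ε, hε, h⟩ := FF_sep γ h0 h8 h1 hc
      refine ⟨ε, hε, fun γ' hγ' z hz => ?_⟩
      have := h z hz
      rw [FF_mod, hγ.1, hγ.2] at this
      rw [FF_mod, hγ'.1, hγ'.2]
      exact this
    · exact ⟨1, one_pos, fun γ hγ => absurd ⟨γ, hγ⟩ hp⟩
  choose ε hε h using key
  refine ⟨Finset.univ.inf' Finset.univ_nonempty ε, ?_, fun τ => ?_⟩
  · rw [gt_iff_lt, Finset.lt_inf'_iff]
    exact fun p _ => hε p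
  · obtain ⟨g, hg⟩ := ModularGroup.exists_smul_mem_fd τ
    have e : τ = g⁻¹ • (g • τ) := by rw [inv_smul_smul]
    rw [e, FF_smul]
    generalize g⁻¹ = γ at *
    have m0 := Int.emod_nonneg (γ 0 0) (by norm_num : (6 : ℤ) ≠ 0)
    have m1 := Int.emod_nonneg (γ 0 1) (by norm_num : (6 : ℤ) ≠ 0)
    have l0 := Int.emod_lt_of_pos (γ 0 0) (by norm_num : (0 : ℤ) < 6)
    have l1 := Int.emod_lt_of_pos (γ 0 1) (by norm_num : (0 : ℤ) < 6)
    let p : Fin 6 × Fin 6 := (⟨(γ 0 0 % 6).toNat, by omega⟩, ⟨(γ 0 1 % 6).toNat, by omega⟩)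
    refine (Finset.inf'_le ε (Finset.mem_univ p)).trans (h p γ ⟨?_, ?_⟩ _ hg)
    · simp only [p]; omega
    · simp only [p]; omega

lemma FF_range_open : IsOpen (Set.range (fun τ : ℍ => FF 1 0 τ)) := by
  have hU : IsOpen {z : ℂ | 0 < z.im} := isOpen_lt continuous_const Complex.continuous_im
  have hd : DifferentiableOn ℂ (FF 1 0) {z : ℂ | 0 < z.im} :=
    fun z hz => (FF_diff hz).differentiableWithinAt
  have hpc : IsPreconnected {z : ℂ | 0 < z.im} := (convex_halfSpace_im_gt 0).isPreconnected
  have e : Set.range (fun τ : ℍ => FF 1 0 τ) = FF 1 0 '' {z : ℂ | 0 < z.im} := by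
    ext w
    constructor
    · rintro ⟨τ, rfl⟩; exact ⟨τ, τ.2, rfl⟩
    · rintro ⟨z, hz, rfl⟩; exact ⟨⟨z, hz⟩, rfl⟩
  rw [e]
  rcases (hd.analyticOnNhd hU).is_constant_or_isOpen hpc with ⟨w, hw⟩ | h
  · exfalso
    have h1 := (FF_lim1 0).eventually_ge_atTop (‖w‖ + 1)
    rw [LL, Filter.eventually_comap] at h1
    obtain ⟨M, hM⟩ := Filter.eventually_atTop.mp h1
    have := hM (max M 1) (le_max_left _ _) (((max M 1 : ℝ) : ℂ) * Complex.I) (by simp)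
    rw [hw] at this
    · linarith
    · simp
  · exact h _ subset_rfl hU

lemma FF_range : Set.range (fun τ : ℍ => FF 1 0 τ) = ({0, 8, -1} : Set ℂ)ᶜ := by
  apply Set.Subset.antisymm
  · rintro _ ⟨τ, rfl⟩
    obtain ⟨h1, h2, h3⟩ := FF_omit τ.2
    simp only [Set.mem_compl_iff, Set.mem_insert_iff, Set.mem_singleton_iff, not_or]
    exact ⟨h1, h2, h3⟩
  · have hpc : IsPreconnected ({0, 8, -1} : Set ℂ)ᶜ :=
      (Set.Countable.isPathConnected_compl_of_one_lt_rank
        (by rw [Complex.rank_real_complex]; norm_num)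
        (Set.toFinite _).countable).isConnected.isPreconnected
    refine hpc.subset_of_closure_inter_subset FF_range_open ?_ ?_
    · refine ⟨FF 1 0 (UpperHalfPlane.I : ℍ), ?_, ⟨_, rfl⟩⟩
      obtain ⟨h1, h2, h3⟩ := FF_omit (UpperHalfPlane.I : ℍ).2
      simp only [Set.mem_compl_iff, Set.mem_insert_iff, Set.mem_singleton_iff, not_or]
      exact ⟨h1, h2, h3⟩
    · rintro c ⟨hcl, hc⟩
      by_contra hcr
      simp only [Set.mem_compl_iff, Set.mem_insert_iff, Set.mem_singleton_iff, not_or] at hc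
      obtain ⟨ε, hε, h⟩ := FF_sep_all hc.1 hc.2.1 hc.2.2 (fun τ hτ => hcr ⟨τ, hτ⟩)
      obtain ⟨_, ⟨τ, rfl⟩, hd⟩ := Metric.mem_closure_iff.mp hcl ε hε
      have := h τ
      rw [dist_comm, dist_eq_norm] at hd
      linarith

theorem statement13 :
    MDifferentiable 𝓘(ℂ) 𝓘(ℂ) gUp6 ∧
    (∀ c : ℂ, (∀ τ : ℍ, gUp6 τ - c ≠ 0) ↔ (c = 0 ∨ c = 8 ∨ c = -1)) ∧
    Set.range gUp6 = ({0, 8, -1} : Set ℂ)ᶜ := by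
  have hg : gUp6 = fun τ : ℍ => FF 1 0 τ := funext gUp6_eq
  have hr : Set.range gUp6 = ({0, 8, -1} : Set ℂ)ᶜ := by rw [hg]; exact FF_range
  refine ⟨?_, ?_, hr⟩
  · rw [UpperHalfPlane.mdifferentiable_iff]
    intro z hz
    have h1 : DifferentiableWithinAt ℂ (FF 1 0) {z : ℂ | 0 < z.im} z :=
      (FF_diff hz).differentiableWithinAt
    refine h1.congr ?_ ?_
    · intro w hw
      simp only [Function.comp_apply]
      rw [gUp6_eq, UpperHalfPlane.ofComplex_apply_of_im_pos hw]
    · simp only [Function.comp_apply]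
      rw [gUp6_eq, UpperHalfPlane.ofComplex_apply_of_im_pos hz]
  · intro c
    have : (∀ τ : ℍ, gUp6 τ - c ≠ 0) ↔ c ∉ Set.range gUp6 := by
      simp [sub_eq_zero]
    rw [this, hr]
    rw [Set.mem_compl_iff, not_not]
    simp only [Set.mem_insert_iff, Set.mem_singleton_iff]
end
end
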